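/- arXiv:1801.01605 — 4 statements merged into one kernel-verified Lean document; each statement's English description precedes it below -/
import Mathlib

section
/- There exists an absolute constant C > 0 such that for all integers a ≥ 0, d ≥ 1, N ≥ 1 satisfying max(N·d, N²) ≤ a ≤ N²·d/1800, one has δ ≤ C · a^{1/4} · d^{1/2} / N^{1/2}; that is, there exist an integer n with 0 ≤ n ≤ N and an integer m with |a + n·d − m²| ≤ C · a^{1/4} · d^{1/2} / N^{1/2}. -/
lemma core_step (a d q b m1 σ e : ℤ) (hd : 1 ≤ d) (hq : 1 ≤ q) (hc : IsCoprime b q)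
    (hσ : σ * σ = 1) (he : 0 ≤ e) (h2 : 2 * m1 * q = b * d + σ * e) :
    ∃ g h n β : ℤ, 0 ≤ g ∧ 0 ≤ h ∧ h ≤ g + q ∧ q * g ^ 2 ≤ d ∧
      (m1 + σ * h) ^ 2 = a + n * d + β ∧ 0 ≤ β ∧ β ≤ e + 2 * (q * g) + q ^ 2 := by
  obtain ⟨u, v, huv⟩ := hc
  set D := q * (a - m1 ^ 2) with hD
  set ρ := D % d with hρ
  set s := D / d with hs
  have hDs : D = ρ + d * s := (Int.emod_add_mul_ediv D d).symm
  have hρ0 : 0 ≤ ρ := Int.emod_nonneg _ (by omega)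
  have hρ1 : ρ < d := Int.emod_lt_of_pos _ (by omega)
  set r := (σ * u * s) % q with hr
  have hr0 : 0 ≤ r := Int.emod_nonneg _ (by omega)
  have hr1 : r < q := Int.emod_lt_of_pos _ (by omega)
  have hrq : σ * u * s = r + q * ((σ * u * s) / q) := (Int.emod_add_mul_ediv _ q).symm
  set w := (σ * u * s) / q
  have hex : ∃ k : ℕ, ρ ≤ e * (r + q * k) + q * (r + q * k) ^ 2 := by
    refine ⟨d.toNat, ?_⟩
    have hdd : ((d.toNat : ℕ) : ℤ) = d := Int.toNat_of_nonneg (by omega)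
    rw [hdd]
    have h1 : d ≤ r + q * d := by nlinarith
    have h3 : d ≤ (r + q * d) ^ 2 := by nlinarith
    have h4 : 0 ≤ e * (r + q * d) := mul_nonneg he (by omega)
    nlinarith
  -- identity for any element of the class
  have key : ∀ k : ℤ, ∃ n β : ℤ, (m1 + σ * (r + q * k)) ^ 2 = a + n * d + β ∧
      q * β = e * (r + q * k) + q * (r + q * k) ^ 2 - ρ := by
    intro k
    have hb : σ * b * (r + q * k) = s + q * (σ * b * (k - w) - v * s) := by
      have : r = σ * u * s - q * w := by linarith
      rw [this]
      have e1 : σ * b * (σ * u * s - q * w + q * k) = (σ * σ) * (u * b) * s + q * (σ * b * (k - w)) := by ring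
      rw [e1, hσ]
      have : u * b = 1 - v * q := by linarith
      rw [this]; ring
    set n := σ * b * (k - w) - v * s
    refine ⟨n, (m1 + σ * (r + q * k)) ^ 2 - a - n * d, by ring, ?_⟩
    set h := r + q * k
    have e2 : q * ((m1 + σ * h) ^ 2 - a - n * d) =
      -(q * (a - m1 ^ 2)) + (2 * m1 * q) * σ * h + (σ * σ) * q * h ^ 2 - q * n * d := by ring
    rw [e2, h2, hσ, ← hD, hDs]
    have e3 : (b * d + σ * e) * σ * h = d * (σ * b * h) + (σ * σ) * e * h := by ring
    rw [e3, hb, hσ]; ring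
  classical
  set k := Nat.find hex with hk
  have hks := Nat.find_spec hex
  rw [← hk] at hks
  obtain ⟨n, β, hn, hβ⟩ := key k
  have hβ0 : 0 ≤ β := by
    by_contra hcon
    push Not at hcon
    nlinarith
  rcases Nat.eq_zero_or_pos k with h0 | hpos
  · rw [h0] at hn hβ
    simp only [Nat.cast_zero, mul_zero, add_zero] at hn hβ
    refine ⟨0, r, n, β, le_refl _, hr0, by omega, by simp; omega, hn, hβ0, ?_⟩
    have h5 : e * r ≤ e * q := by nlinarith
    have h6 : r ^ 2 ≤ q ^ 2 := by nlinarith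
    have h7 : q * β ≤ q * (e + q ^ 2) := by nlinarith
    have := le_of_mul_le_mul_left h7 (by omega)
    linarith
  · have hmin := Nat.find_min hex (m := k - 1) (by omega)
    push Not at hmin
    have hcast : ((k - 1 : ℕ) : ℤ) = (k : ℤ) - 1 := by omega
    rw [hcast] at hmin
    have hk1 : (1 : ℤ) ≤ k := by exact_mod_cast hpos
    set g := r + q * ((k : ℤ) - 1) with hg
    have hgh : r + q * (k : ℤ) = g + q := by rw [hg]; ring
    rw [hgh] at hn hβ
    have hg0 : 0 ≤ g := by
      have : 0 ≤ q * ((k : ℤ) - 1) := mul_nonneg (by omega) (by omega)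
      omega
    have heg : 0 ≤ e * g := mul_nonneg he hg0
    refine ⟨g, g + q, n, β, hg0, by omega, le_refl _, by linarith, hn, hβ0, ?_⟩
    have h7 : q * β ≤ q * (e + 2 * (q * g) + q ^ 2) := by
      have e5 : q * (e + 2 * (q * g) + q ^ 2) = e * (g + q) + q * (g + q) ^ 2 - (e * g + q * g ^ 2) := by
        ring
      rw [hβ, e5]; linarith
    exact le_of_mul_le_mul_left h7 (by omega)

lemma finish (a d N q b m0 m1 : ℤ) (s K T : ℝ) (hd : 1 ≤ d) (hq : 1 ≤ q)
    (hc : IsCoprime b q) (hs : 0 ≤ s) (hsa : s ^ 2 = a) (hT : 0 ≤ T)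
    (hK : 14 * √(d : ℝ) ≤ K) (hK2 : 588 ≤ K) (hKN : (s + K) ^ 2 ≤ a + N * d)
    (hm0 : s + K / 2 ≤ m0) (hm0' : (m0 : ℝ) ≤ s + K / 2 + 1)
    (hm1 : |(m1 : ℝ) - m0| ≤ K / 4 + 1) (hqK : (q : ℝ) ≤ K / 14)
    (he : |2 * (m1 : ℝ) * q - b * d| ≤ 8 * T) (hq2 : (q : ℝ) ^ 2 ≤ 4 * T)
    (hqd : (q : ℝ) * d ≤ 4 * T ^ 2) :
    ∃ n m : ℤ, 0 ≤ n ∧ n ≤ N ∧ |((a + n * d - m ^ 2 : ℤ) : ℝ)| ≤ 16 * T := by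
  have hs' : ∃ σ e : ℤ, σ * σ = 1 ∧ 0 ≤ e ∧ 2 * m1 * q = b * d + σ * e ∧ (e : ℝ) ≤ 8 * T
      ∧ (σ = 1 ∨ σ = -1) := by
    have hh := abs_le.1 he
    rcases le_total 0 (2 * m1 * q - b * d) with h | h
    · refine ⟨1, 2 * m1 * q - b * d, by norm_num, h, by ring, ?_, by simp⟩
      push_cast; linarith
    · refine ⟨-1, -(2 * m1 * q - b * d), by norm_num, by linarith, by ring, ?_, by simp⟩
      push_cast; linarith
  obtain ⟨σ, e, hσ, he0, h2, heT, hσ1⟩ := hs'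
  obtain ⟨g, h, n, β, hg0, hh0, hhg, hqg, hn, hβ0, hβ⟩ :=
    core_step a d q b m1 σ e hd hq hc hσ he0 h2
  have hdR : (1 : ℝ) ≤ d := by exact_mod_cast hd
  have hqR : (1 : ℝ) ≤ q := by exact_mod_cast hq
  have hgR : (0 : ℝ) ≤ g := by exact_mod_cast hg0
  have hhR : (0 : ℝ) ≤ h := by exact_mod_cast hh0
  have hhgR : (h : ℝ) ≤ g + q := by exact_mod_cast hhg
  have hqgR : (q : ℝ) * g ^ 2 ≤ d := by exact_mod_cast hqg
  have hβR : (β : ℝ) ≤ e + 2 * (q * g) + q ^ 2 := by exact_mod_cast hβ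
  have hgd : (g : ℝ) ≤ √(d : ℝ) := by
    apply Real.le_sqrt_of_sq_le; nlinarith [sq_nonneg (g : ℝ)]
  have hqgT : (q : ℝ) * g ≤ 2 * T := by
    apply le_of_sq_le_sq _ (by positivity)
    nlinarith
  have hβT : (β : ℝ) ≤ 16 * T := by linarith
  set m := m1 + σ * h with hm
  have hmR : |(m : ℝ) - m1| ≤ h := by
    rw [hm]; push_cast
    rcases hσ1 with h | h <;> rw [h] <;> simp [abs_of_nonneg hhR]
  have hA := abs_le.1 hmR
  have hB := abs_le.1 hm1
  have hml : s ≤ m := by linarith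
  have hmu : (m : ℝ) ≤ s + K := by linarith
  have hmaR : (a : ℝ) ≤ m ^ 2 := by rw [← hsa]; exact pow_le_pow_left₀ hs hml 2
  have hmNR : (m : ℝ) ^ 2 ≤ a + N * d :=
    (pow_le_pow_left₀ (hs.trans hml) hmu 2).trans hKN
  have hma : a ≤ m ^ 2 := by exact_mod_cast hmaR
  have hmN : m ^ 2 ≤ a + N * d := by exact_mod_cast hmNR
  have hdiv := Int.emod_add_mul_ediv (m ^ 2 - a) d
  have hmod := Int.emod_nonneg (m ^ 2 - a) (b := d) (by omega)
  refine ⟨(m ^ 2 - a) / d, m, Int.ediv_nonneg (by omega) (by omega), ?_, ?_⟩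
  · apply Int.ediv_le_of_le_mul (by omega); linarith
  · have hle : n ≤ (m ^ 2 - a) / d := by
      rw [Int.le_ediv_iff_mul_le (by omega)]; linarith
    set n' := (m ^ 2 - a) / d
    have h1 : n * d ≤ n' * d := mul_le_mul_of_nonneg_right hle (by omega)
    have h3 : -β ≤ a + n' * d - m ^ 2 := by linarith
    have h4 : a + n' * d - m ^ 2 ≤ 0 := by linarith
    have h3R : -(β : ℝ) ≤ ((a + n' * d - m ^ 2 : ℤ) : ℝ) := by exact_mod_cast h3
    have h4R : ((a + n' * d - m ^ 2 : ℤ) : ℝ) ≤ 0 := by exact_mod_cast h4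
    rw [abs_of_nonpos h4R]; linarith

lemma rat_coprime (x : ℚ) : IsCoprime x.num (x.den : ℤ) := by
  rw [Int.isCoprime_iff_gcd_eq_one]
  simpa [Int.gcd] using x.reduced

lemma main_bound (a d N : ℤ) (s k T : ℝ) (hd : 1 ≤ d) (hs : 0 ≤ s) (hsa : s ^ 2 = a)
    (hT : 0 < T) (hk : 0 < k) (hTk : T * k = d)
    (hK : 14 * √(d : ℝ) ≤ k ^ 2) (hK2 : 588 ≤ k ^ 2) (hKN : (s + k ^ 2) ^ 2 ≤ a + N * d)
    (hKd : k ^ 2 ≤ d) :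
    ∃ n m : ℤ, 0 ≤ n ∧ n ≤ N ∧ |((a + n * d - m ^ 2 : ℤ) : ℝ)| ≤ 16 * T := by
  have hdR : (1 : ℝ) ≤ d := by exact_mod_cast hd
  have hd0 : (0 : ℝ) < d := by linarith
  have hk24 : 24 ≤ k := by nlinarith
  have hm0 := Int.le_ceil (s + k ^ 2 / 2)
  have hm0' := (Int.ceil_lt_add_one (s + k ^ 2 / 2)).le
  set m0 := ⌈s + k ^ 2 / 2⌉
  rcases le_total (k ^ 3) d with hcase | hcase
  · have hTk2 : k ^ 2 ≤ T := by
      apply le_of_mul_le_mul_right _ hk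
      rw [hTk]; linarith [show k ^ 2 * k = k ^ 3 by ring]
    have hQ1 : 0 < ⌊k⌋₊ := Nat.floor_pos.2 (by linarith)
    have hQle : (⌊k⌋₊ : ℝ) ≤ k := Nat.floor_le hk.le
    have hQlt : k < (⌊k⌋₊ : ℝ) + 1 := Nat.lt_floor_add_one k
    obtain ⟨x, hx, hxd⟩ := Real.exists_rat_abs_sub_le_and_den_le (2 * (m0 : ℝ) / d) hQ1
    have hxdR : (x.den : ℝ) ≤ k := le_trans (by exact_mod_cast hxd) hQle
    have hden : (1 : ℝ) ≤ x.den := by exact_mod_cast x.den_pos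
    have hxq : (x : ℝ) = x.num / x.den := by exact_mod_cast (Rat.num_div_den x).symm
    refine finish a d N x.den x.num m0 m0 s (k ^ 2) T hd (by exact_mod_cast x.den_pos)
      (rat_coprime x) hs hsa hT.le hK hK2 hKN hm0 hm0' (by simp; positivity) ?_ ?_ ?_ ?_
    · push_cast; nlinarith
    · push_cast
      have e1 : 2 * (m0 : ℝ) * x.den - x.num * d = (2 * (m0 : ℝ) / d - x) * (d * x.den) := by
        rw [hxq]; field_simp
      rw [e1, abs_mul, abs_of_pos (show 0 < (d : ℝ) * x.den by positivity)]
      calc _ ≤ 1 / (((⌊k⌋₊ : ℝ) + 1) * x.den) * (d * x.den) := by gcongr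
        _ = d / ((⌊k⌋₊ : ℝ) + 1) := by field_simp
        _ ≤ d / k := by gcongr
        _ = T := by rw [← hTk]; field_simp
        _ ≤ 8 * T := by linarith
    · push_cast; nlinarith
    · push_cast
      have : (x.den : ℝ) * d ≤ k * d := by gcongr
      rw [← hTk] at this
      rw [← hTk]
      nlinarith
  · have hTk2 : T ≤ k ^ 2 := by
      apply le_of_mul_le_mul_right _ hk
      rw [hTk]; linarith [show k ^ 2 * k = k ^ 3 by ring]
    have hk2 : 0 < k ^ 2 := by positivity
    set Y := 2 * d / k ^ 2 with hY
    have hYT : Y * k = 2 * T := by rw [hY, ← hTk]; field_simp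
    have hYk : Y * k ^ 2 = 2 * d := by rw [hY]; field_simp
    have hY1 : 2 ≤ Y := by rw [hY, le_div_iff₀ hk2]; linarith
    have hQ1 : 0 < ⌊Y⌋₊ := Nat.floor_pos.2 (by linarith)
    have hQle : (⌊Y⌋₊ : ℝ) ≤ Y := Nat.floor_le (by linarith)
    have hQlt : Y < (⌊Y⌋₊ : ℝ) + 1 := Nat.lt_floor_add_one Y
    obtain ⟨x, hx, hxd⟩ := Real.exists_rat_abs_sub_le_and_den_le (2 * (m0 : ℝ) / d) hQ1
    have hxdR : (x.den : ℝ) ≤ Y := le_trans (by exact_mod_cast hxd) hQle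
    have hden : (1 : ℝ) ≤ x.den := by exact_mod_cast x.den_pos
    have hxq : (x : ℝ) = x.num / x.den := by exact_mod_cast (Rat.num_div_den x).symm
    have hY2 : Y ^ 2 ≤ 4 * T := by
      have : Y ^ 2 * k ^ 2 ≤ 4 * T * k ^ 2 := by
        calc Y ^ 2 * k ^ 2 = (Y * k) ^ 2 := by ring
          _ = 4 * T * T := by rw [hYT]; ring
          _ ≤ _ := by gcongr
      exact le_of_mul_le_mul_right this hk2
    have hq2 : (x.den : ℝ) ^ 2 ≤ 4 * T := le_trans (by gcongr) hY2
    have hr := abs_sub_round ((x : ℝ) * d / 2)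
    set m1 := round ((x : ℝ) * d / 2)
    refine finish a d N x.den x.num m0 m1 s (k ^ 2) T hd (by exact_mod_cast x.den_pos)
      (rat_coprime x) hs hsa hT.le hK hK2 hKN hm0 hm0' ?_ ?_ ?_ ?_ ?_
    · have e1 : (m1 : ℝ) - m0 = -((x : ℝ) * d / 2 - m1) - (2 * (m0 : ℝ) / d - x) * (d / 2) := by
        field_simp; ring
      have e2 : |(2 * (m0 : ℝ) / d - x) * (d / 2)| ≤ k ^ 2 / 4 := by
        rw [abs_mul, abs_of_pos (show 0 < (d : ℝ) / 2 by positivity)]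
        calc _ ≤ 1 / (((⌊Y⌋₊ : ℝ) + 1) * x.den) * (d / 2) := by gcongr
          _ ≤ 1 / (Y * 1) * (d / 2) := by gcongr
          _ = k ^ 2 / 4 := by rw [hY]; field_simp; norm_num
      rw [abs_le] at *
      constructor <;> linarith [hr.1, hr.2, e2.1, e2.2]
    · push_cast
      have h14 : 196 * (d : ℝ) ≤ k ^ 2 * k ^ 2 := by
        have h1 := Real.sq_sqrt hd0.le
        have h2 := Real.sqrt_nonneg (d : ℝ)
        nlinarith
      have : Y * k ^ 2 ≤ k ^ 2 / 14 * k ^ 2 := by rw [hYk]; linarith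
      exact hxdR.trans (le_of_mul_le_mul_right this hk2)
    · push_cast
      have e1 : 2 * (m1 : ℝ) * x.den - x.num * d = ((x : ℝ) * d / 2 - m1) * (-(2 * x.den)) := by
        rw [hxq]; field_simp; ring
      rw [e1, abs_mul, abs_neg, abs_of_pos (show 0 < 2 * (x.den : ℝ) by positivity)]
      nlinarith
    · push_cast; exact hq2
    · push_cast
      calc (x.den : ℝ) * d ≤ Y * d := by gcongr
        _ = (Y * k) * T := by rw [← hTk]; ring
        _ = 2 * T ^ 2 := by rw [hYT]; ring
        _ ≤ 4 * T ^ 2 := by linarith [sq_nonneg T]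

/-- For integers `a ≥ 0`, `d ≥ 1`, `N ≥ 1` with `max (N*d) (N^2) ≤ a ≤ N^2*d/1800`,
some term of the arithmetic progression `a, a+d, ..., a+N*d` is within
`C * a^(1/4) * d^(1/2) / N^(1/2)` of a perfect square. -/
theorem closest_square_to_AP_bound_one :
    ∃ C : ℝ, 0 < C ∧ ∀ a d N : ℤ, 0 ≤ a → 1 ≤ d → 1 ≤ N →
      max (N * d) (N ^ 2) ≤ a → (a : ℝ) ≤ (N : ℝ) ^ 2 * d / 1800 →
      ∃ n m : ℤ, 0 ≤ n ∧ n ≤ N ∧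
        |((a + n * d - m ^ 2 : ℤ) : ℝ)| ≤
          C * (a : ℝ) ^ ((1 : ℝ) / 4) * (d : ℝ) ^ ((1 : ℝ) / 2) / (N : ℝ) ^ ((1 : ℝ) / 2) := by
  refine ⟨32, by norm_num, ?_⟩
  intro a d N ha hd hN hmax hup
  have hNd : N * d ≤ a := le_trans (le_max_left _ _) hmax
  have hNN : N ^ 2 ≤ a := le_trans (le_max_right _ _) hmax
  have hdR : (1 : ℝ) ≤ d := by exact_mod_cast hd
  have hNR : (1 : ℝ) ≤ N := by exact_mod_cast hN
  have hNdR : (N : ℝ) * d ≤ a := by exact_mod_cast hNd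
  have hNNR : (N : ℝ) ^ 2 ≤ a := by exact_mod_cast hNN
  have haR : (1 : ℝ) ≤ a := by nlinarith
  -- p = a^(1/4), x = d^(1/2), y = N^(1/2)
  obtain ⟨p, hp⟩ : ∃ p, p = (a : ℝ) ^ ((1 : ℝ) / 4) := ⟨_, rfl⟩
  obtain ⟨x, hx⟩ : ∃ x, x = (d : ℝ) ^ ((1 : ℝ) / 2) := ⟨_, rfl⟩
  obtain ⟨y, hy⟩ : ∃ y, y = (N : ℝ) ^ ((1 : ℝ) / 2) := ⟨_, rfl⟩
  have hp0 : 0 < p := by rw [hp]; positivity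
  have hx0 : 0 < x := by rw [hx]; positivity
  have hy0 : 0 < y := by rw [hy]; positivity
  have hp4 : p ^ 4 = a := by
    rw [hp, ← Real.rpow_natCast, ← Real.rpow_mul (by linarith)]; norm_num
  have hx2 : x ^ 2 = d := by
    rw [hx, ← Real.rpow_natCast, ← Real.rpow_mul (by linarith)]; norm_num
  have hy2 : y ^ 2 = N := by
    rw [hy, ← Real.rpow_natCast, ← Real.rpow_mul (by linarith)]; norm_num
  rw [← hp, ← hx, ← hy]
  have hsq : √(d : ℝ) = x := by rw [← hx2]; exact Real.sqrt_sq hx0.le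
  have h3 : (√3 : ℝ) ^ 2 = 3 := Real.sq_sqrt (by norm_num)
  have h30 : 0 < √(3 : ℝ) := by positivity
  have h32 : √(3 : ℝ) ≤ 2 := by nlinarith
  have hNp : (N : ℝ) ≤ p ^ 2 := by
    apply le_of_sq_le_sq _ (by positivity)
    calc (N : ℝ) ^ 2 ≤ a := hNNR
      _ = (p ^ 2) ^ 2 := by rw [← hp4]; ring
  have hpx : 42 * p ^ 2 ≤ N * x := by
    apply le_of_sq_le_sq _ (by positivity)
    have : (N * x) ^ 2 = (N : ℝ) ^ 2 * d := by rw [← hx2]; ring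
    rw [this, mul_pow, show (p ^ 2) ^ 2 = (a : ℝ) by rw [← hp4]; ring]
    linarith
  have hx42 : 42 ≤ x := by
    have : 42 * (N : ℝ) ≤ x * N := by linarith
    exact le_of_mul_le_mul_right this (by linarith)
  have hp2 : 0 < p ^ 2 := by positivity
  set k := y * x / (√3 * p) with hk
  have hk0 : 0 < k := by positivity
  have hkk : k ^ 2 = N * d / (3 * p ^ 2) := by
    rw [hk, div_pow, mul_pow, mul_pow, hx2, hy2, h3]
  have hK : 14 * √(d : ℝ) ≤ k ^ 2 := by
    rw [hsq, hkk, le_div_iff₀ (by positivity), ← hx2]; nlinarith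
  have hT : 0 < √3 * p * x / y := by positivity
  have hA : (p ^ 2 + k ^ 2) ^ 2 ≤ a + N * d := by
    have e1 : k ^ 2 * p ^ 2 = N * d / 3 := by rw [hkk]; field_simp
    have e2 : k ^ 2 ≤ p ^ 2 / 3 := by
      rw [hkk, div_le_iff₀ (by positivity)]
      have : p ^ 2 / 3 * (3 * p ^ 2) = (a : ℝ) := by rw [← hp4]; ring
      rw [this]; exact hNdR
    have e3 : (p ^ 2 + k ^ 2) ^ 2 = a + 2 * (k ^ 2 * p ^ 2) + k ^ 2 * k ^ 2 := by rw [← hp4]; ring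
    have e4 : k ^ 2 * k ^ 2 ≤ k ^ 2 * (p ^ 2 / 3) := by gcongr
    rw [e3]
    have : 0 ≤ (N : ℝ) * d := by positivity
    linarith
  have hB : k ^ 2 ≤ d := by
    rw [hkk, div_le_iff₀ (by positivity)]
    nlinarith
  obtain ⟨n, m, hn0, hnN, hnm⟩ := main_bound a d N (p ^ 2) k (√3 * p * x / y) hd (by positivity)
    (by rw [← hp4]; ring) hT hk0 (by rw [hk, ← hx2]; field_simp) hK
    (by rw [hsq] at hK; linarith) hA hB
  refine ⟨n, m, hn0, hnN, hnm.trans ?_⟩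
  rw [← mul_div_assoc]
  apply div_le_div_of_nonneg_right _ hy0.le
  have := mul_le_mul_of_nonneg_right h32 (mul_pos hp0 hx0).le
  linarith
end

section
/- There exists an absolute constant C > 0 such that for all integers a ≥ 0, d ≥ 1, N ≥ 1 satisfying N² ≤ a ≤ N·d and a ≤ N²·d/1800, one has δ ≤ C · d^{3/4} / N^{1/4}; that is, there exist an integer n with 0 ≤ n ≤ N and an integer m with |a + n·d − m²| ≤ C · d^{3/4} / N^{1/4}. -/
lemma final_bound (d N x : ℝ) (hd : 0 < d) (hN : 0 < N)
    (h : x ^ 4 * N ≤ 3000 ^ 4 * d ^ 3) :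
    x ≤ 3000 * d ^ ((3 : ℝ) / 4) / N ^ ((1 : ℝ) / 4) := by
  have h1 : (d ^ ((3 : ℝ) / 4)) ^ 4 = d ^ 3 := by
    rw [← Real.rpow_natCast, ← Real.rpow_mul hd.le, ← Real.rpow_natCast]; norm_num
  have h2 : (N ^ ((1 : ℝ) / 4)) ^ 4 = N := by
    rw [← Real.rpow_natCast, ← Real.rpow_mul hN.le]; norm_num
  have h3 : 0 < d ^ ((3 : ℝ) / 4) := Real.rpow_pos_of_pos hd _
  have h4 : 0 < N ^ ((1 : ℝ) / 4) := Real.rpow_pos_of_pos hN _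
  refine le_of_pow_le_pow_left₀ (n := 4) (by norm_num) (by positivity) ?_
  rw [div_pow, mul_pow, h1, h2, le_div_iff₀ hN]
  exact h

lemma exists_floor_sqrt (x : ℤ) (hx : 0 ≤ x) :
    ∃ m : ℤ, 0 ≤ m ∧ m ^ 2 ≤ x ∧ x ≤ m ^ 2 + 2 * m := by
  obtain ⟨n, rfl⟩ := Int.eq_ofNat_of_zero_le hx
  refine ⟨Nat.sqrt n, by positivity, ?_, ?_⟩
  · have := Nat.sqrt_le' n
    exact_mod_cast this
  · have := Nat.sqrt_le_add n
    have h2 : n ≤ Nat.sqrt n ^ 2 + 2 * Nat.sqrt n := by nlinarith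
    exact_mod_cast h2

lemma exists_p (a d N : ℤ) (ha : 0 ≤ a) (hN : 1 ≤ N) (hNd : N ≤ d) (h2 : a ≤ N * d) :
    ∃ p : ℤ, 13 ≤ p ∧ 900 * d ^ 2 ≤ 2 * p ^ 2 * (2 * a + N * d) ∧
      4 * p ^ 2 * a ≤ 900 * d ^ 2 ∧ p ^ 2 * N ≤ 600 * d ∧ 150 * d ≤ p ^ 2 * N := by
  have hd : 1 ≤ d := by linarith
  have hNdpos : 1 ≤ N * d := by nlinarith
  have hex : ∃ p : ℕ, 900 * d ^ 2 ≤ 2 * (p : ℤ) ^ 2 * (2 * a + N * d) := by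
    refine ⟨(30 * d).toNat, ?_⟩
    rw [Int.toNat_of_nonneg (by linarith)]
    nlinarith [sq_nonneg d, mul_nonneg (sq_nonneg d) (by linarith : 0 ≤ 2 * a + N * d - 1)]
  classical
  obtain ⟨p, hp, hmin⟩ : ∃ p : ℕ, 900 * d ^ 2 ≤ 2 * (p : ℤ) ^ 2 * (2 * a + N * d) ∧
      ∀ k < p, ¬ 900 * d ^ 2 ≤ 2 * (k : ℤ) ^ 2 * (2 * a + N * d) :=
    ⟨Nat.find hex, Nat.find_spec hex, fun k hk => Nat.find_min hex hk⟩
  have hlow : 150 * d ≤ (p : ℤ) ^ 2 * N := by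
    have h1 : 2 * (p : ℤ) ^ 2 * (2 * a + N * d) ≤ 2 * (p : ℤ) ^ 2 * (3 * (N * d)) :=
      mul_le_mul_of_nonneg_left (by linarith) (by positivity)
    have h3 : d * (150 * d) ≤ d * ((p : ℤ) ^ 2 * N) := by nlinarith
    exact le_of_mul_le_mul_left h3 (by linarith)
  have hp13 : 13 ≤ (p : ℤ) := by
    by_contra hc
    have : (p : ℤ) ≤ 12 := by omega
    have : (p : ℤ) ^ 2 ≤ 144 := by nlinarith
    nlinarith
  have hm := hmin (p - 1) (by omega)
  rw [Nat.cast_sub (by omega)] at hm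
  push_cast at hm
  push Not at hm
  have hup : ((p : ℤ) - 1) ^ 2 * N ≤ 450 * d := by
    have h3 : d * (((p : ℤ) - 1) ^ 2 * N) ≤ d * (450 * d) := by
      nlinarith [mul_nonneg (sq_nonneg ((p : ℤ) - 1)) ha]
    exact le_of_mul_le_mul_left h3 (by linarith)
  have hsq : 144 * (p : ℤ) ^ 2 ≤ 169 * ((p : ℤ) - 1) ^ 2 := by nlinarith
  refine ⟨p, hp13, hp, ?_, ?_, hlow⟩
  · have h5 : (p : ℤ) ^ 2 * (4 * a) * 144 ≤ 169 * ((p : ℤ) - 1) ^ 2 * (4 * a) := by nlinarith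
    have h6 : ((p : ℤ) - 1) ^ 2 * a ≤ ((p : ℤ) - 1) ^ 2 * (N * d) :=
      mul_le_mul_of_nonneg_left h2 (by positivity)
    have h7 : 0 ≤ ((p : ℤ) - 1) ^ 2 * a := by positivity
    nlinarith
  · nlinarith

set_option maxHeartbeats 2000000 in
lemma core (a d N : ℤ) (ha : 0 ≤ a) (hN : 1 ≤ N) (hNd : N ≤ d) (h2 : a ≤ N * d)
    (hbig : 27000000 * d < N ^ 3) :
    ∃ n m x : ℤ, 0 ≤ n ∧ n ≤ N ∧ |a + n * d - m ^ 2| ≤ x ∧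
      x ^ 4 * N ≤ 3000 ^ 4 * d ^ 3 := by
  have hd : 1 ≤ d := by linarith
  have hN300 : 300 < N := by
    by_contra hc
    push Not at hc
    have : N ^ 3 ≤ 300 ^ 3 := pow_le_pow_left₀ (by linarith) hc 3
    linarith
  obtain ⟨p, hp13, hp1, hp2, hp3, hp4⟩ := exists_p a d N ha hN hNd h2
  have hD : 0 < 4 * p ^ 2 * d := by positivity
  obtain ⟨n0, hn0, hn1, hn2⟩ : ∃ n0 : ℤ, 0 ≤ n0 ∧ 4 * p ^ 2 * (a + n0 * d) ≤ 900 * d ^ 2 ∧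
      900 * d ^ 2 < 4 * p ^ 2 * (a + n0 * d + d) := by
    refine ⟨(900 * d ^ 2 - 4 * p ^ 2 * a) / (4 * p ^ 2 * d), Int.ediv_nonneg (by linarith) hD.le, ?_, ?_⟩
    · have := Int.ediv_mul_le (900 * d ^ 2 - 4 * p ^ 2 * a) hD.ne'
      linarith
    · have := Int.lt_ediv_add_one_mul_self (900 * d ^ 2 - 4 * p ^ 2 * a) hD
      linarith
  have hn0N : 2 * n0 ≤ N := by
    have h : (2 * p ^ 2 * d) * (2 * n0) ≤ (2 * p ^ 2 * d) * N := by linarith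
    exact le_of_mul_le_mul_left h (by positivity)
  obtain ⟨m, hm0, hm1, hm2⟩ := exists_floor_sqrt (a + n0 * d) (by positivity)
  have hmsq : m ^ 2 ≤ 2 * (N * d) := by nlinarith
  -- the slope
  obtain ⟨u, hu⟩ : ∃ u, u = 30 * d - 2 * p * m := ⟨_, rfl⟩
  have hu0 : 0 ≤ u := by
    have : (2 * p * m) ^ 2 ≤ (30 * d) ^ 2 := by nlinarith [sq_nonneg p]
    have := abs_le_of_sq_le_sq this (by linarith)
    linarith [le_abs_self (2 * p * m)]
  have hp2d : 4 * p ^ 2 * d ≤ 8 * d ^ 2 := by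
    have : 300 * p ^ 2 ≤ 600 * d := by nlinarith [sq_nonneg p]
    nlinarith
  have hpm : 10 * d < p * (m + 1) := by
    by_contra hc
    push Not at hc
    have h1 : (p * (m + 1)) ^ 2 ≤ (10 * d) ^ 2 := pow_le_pow_left₀ (by positivity) hc 2
    have h3 : 4 * p ^ 2 * (a + n0 * d) ≤ 4 * p ^ 2 * (m ^ 2 + 2 * m) :=
      mul_le_mul_of_nonneg_left hm2 (by positivity)
    nlinarith [sq_nonneg p]
  have hu2 : u ≤ 2 * p ^ 2 := by
    by_contra hc
    push Not at hc
    have hv : 2 * p * (m + 1) + p ^ 2 ≤ 30 * d := by nlinarith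
    have h1 : (2 * p * (m + 1) + p ^ 2) ^ 2 ≤ (30 * d) ^ 2 := pow_le_pow_left₀ (by positivity) hv 2
    have h3 : 4 * p ^ 2 * (a + n0 * d) ≤ 4 * p ^ 2 * (m ^ 2 + 2 * m) :=
      mul_le_mul_of_nonneg_left hm2 (by positivity)
    have h4 : p ^ 2 * (10 * d) ≤ p ^ 2 * (p * (m + 1)) :=
      mul_le_mul_of_nonneg_left hpm.le (by positivity)
    nlinarith [sq_nonneg p, sq_nonneg (p ^ 2)]
  obtain ⟨B, hB⟩ : ∃ B, B = a + n0 * d - m ^ 2 := ⟨_, rfl⟩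
  have hB0 : 0 ≤ B := by linarith
  have hB2 : B ≤ 2 * m := by linarith
  have hex : ∃ t : ℕ, B + u * ((t : ℤ) + 1) - p ^ 2 * ((t : ℤ) + 1) ^ 2 < 0 := by
    refine ⟨(B + u).toNat, ?_⟩
    rw [Int.toNat_of_nonneg (by linarith)]
    have h1 : 1 ≤ p ^ 2 := by nlinarith
    have h3 : (B + u + 1) ^ 2 ≤ p ^ 2 * (B + u + 1) ^ 2 := by
      nlinarith [sq_nonneg (B + u + 1)]
    nlinarith [mul_nonneg hB0 hu0]
  classical
  obtain ⟨k, hk, hmin⟩ : ∃ t : ℕ, B + u * ((t : ℤ) + 1) - p ^ 2 * ((t : ℤ) + 1) ^ 2 < 0 ∧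
      ∀ k < t, ¬ B + u * ((k : ℤ) + 1) - p ^ 2 * ((k : ℤ) + 1) ^ 2 < 0 :=
    ⟨Nat.find hex, Nat.find_spec hex, fun k hk => Nat.find_min hex hk⟩
  obtain ⟨t, ht⟩ : ∃ t : ℤ, t = k := ⟨_, rfl⟩
  have ht0 : 0 ≤ t := by omega
  have hBt : 0 ≤ B + u * t - p ^ 2 * t ^ 2 := by
    rcases Nat.eq_zero_or_pos k with h | h
    · subst h; simp at ht; subst ht; simpa using hB0
    · have h1 := hmin (k - 1) (by omega)
      rw [Nat.cast_sub (by omega)] at h1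
      push_cast at h1
      push Not at h1
      rw [← ht] at h1
      simpa using h1
  rw [← ht] at hk
  have htt : p ^ 2 * (t * (t - 2)) ≤ 2 * m := by
    have h := mul_le_mul_of_nonneg_right hu2 ht0
    linarith
  have hq : 3 ≤ t → p ^ 2 * t ^ 2 ≤ 6 * m := by
    intro h
    have : t ^ 2 ≤ 3 * (t * (t - 2)) := by nlinarith
    nlinarith [sq_nonneg p]
  have hq4 : 3 ≤ t → p ^ 4 * t ^ 4 ≤ 72 * (N * d) := by
    intro h
    have := pow_le_pow_left₀ (by positivity) (hq h) 2
    nlinarith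
  have htN : 60 * t ≤ N := by
    rcases le_or_gt t 2 with h | h
    · linarith
    · have h1 := hq4 (by linarith)
      have h3 := pow_le_pow_left₀ (by positivity) hp4 2
      by_contra hc
      push Not at hc
      have h5 : N ^ 4 ≤ (60 * t) ^ 4 := pow_le_pow_left₀ (by linarith) hc.le 4
      have h6 : (150 * d) ^ 2 * t ^ 4 ≤ (p ^ 2 * N) ^ 2 * t ^ 4 :=
        mul_le_mul_of_nonneg_right h3 (by positivity)
      have h7 : N ^ 2 * (p ^ 4 * t ^ 4) ≤ N ^ 2 * (72 * (N * d)) :=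
        mul_le_mul_of_nonneg_left h1 (by positivity)
      have h8 : (d * N ^ 3) * (22500 * (d * N)) ≤ (d * N ^ 3) * (72 * 60 ^ 4) := by
        have : d ^ 2 * N ^ 4 ≤ d ^ 2 * (60 * t) ^ 4 :=
          mul_le_mul_of_nonneg_left h5 (by positivity)
        nlinarith
      have h9 := le_of_mul_le_mul_left h8 (by positivity)
      nlinarith
  refine ⟨n0 + 30 * t, m + p * t, p ^ 2 * (2 * t + 1), by positivity, by linarith, ?_, ?_⟩
  · have he : a + (n0 + 30 * t) * d - (m + p * t) ^ 2 = B + u * t - p ^ 2 * t ^ 2 := by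
      rw [hB, hu]; ring
    rw [he, abs_of_nonneg hBt]
    linarith
  · have hpN2 := pow_le_pow_left₀ (by positivity) hp3 2
    rcases le_or_gt t 2 with h | h
    · have h1 : p ^ 2 * (2 * t + 1) ≤ p ^ 2 * 5 :=
        mul_le_mul_of_nonneg_left (by linarith) (by positivity)
      have h3 := pow_le_pow_left₀ (by positivity) h1 4
      have h4 := pow_le_pow_left₀ (by positivity) hp3 4
      have h5 : N ^ 3 * ((p ^ 2 * (2 * t + 1)) ^ 4 * N) ≤ N ^ 3 * (3000 ^ 4 * d ^ 3) := by
        calc N ^ 3 * ((p ^ 2 * (2 * t + 1)) ^ 4 * N) = N ^ 4 * (p ^ 2 * (2 * t + 1)) ^ 4 := by ring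
          _ ≤ N ^ 4 * (p ^ 2 * 5) ^ 4 := mul_le_mul_of_nonneg_left h3 (by positivity)
          _ = 625 * (p ^ 2 * N) ^ 4 := by ring
          _ ≤ 625 * (600 * d) ^ 4 := by linarith
          _ = 625 * 600 ^ 4 * d ^ 3 * d := by ring
          _ ≤ 625 * 600 ^ 4 * d ^ 3 * N ^ 3 :=
            mul_le_mul_of_nonneg_left (by linarith) (by positivity)
          _ ≤ N ^ 3 * (3000 ^ 4 * d ^ 3) := by
            have : 0 ≤ N ^ 3 * d ^ 3 := by positivity
            linarith
      exact le_of_mul_le_mul_left h5 (by positivity)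
    · have h1 : p ^ 2 * (2 * t + 1) ≤ p ^ 2 * (3 * t) :=
        mul_le_mul_of_nonneg_left (by linarith) (by positivity)
      have h3 := pow_le_pow_left₀ (by positivity) h1 4
      have h4 := hq4 (by linarith)
      have h5 : N * ((p ^ 2 * (2 * t + 1)) ^ 4 * N) ≤ N * (3000 ^ 4 * d ^ 3) := by
        calc N * ((p ^ 2 * (2 * t + 1)) ^ 4 * N) = N ^ 2 * (p ^ 2 * (2 * t + 1)) ^ 4 := by ring
          _ ≤ N ^ 2 * (p ^ 2 * (3 * t)) ^ 4 := mul_le_mul_of_nonneg_left h3 (by positivity)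
          _ = 81 * (p ^ 2 * N) ^ 2 * (p ^ 4 * t ^ 4) := by ring
          _ ≤ 81 * (600 * d) ^ 2 * (72 * (N * d)) :=
            mul_le_mul (by linarith) h4 (by positivity) (by positivity)
          _ ≤ N * (3000 ^ 4 * d ^ 3) := by
            have : 0 ≤ N * d ^ 3 := by positivity
            linarith
      exact le_of_mul_le_mul_left h5 (by positivity)

lemma trivial_case (a d N : ℤ) (ha : 0 ≤ a) (hd : 1 ≤ d) (hN : 1 ≤ N) (h2 : a ≤ N * d)
    (hsmall : N ^ 3 ≤ 27000000 * d) :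
    ∃ n m x : ℤ, 0 ≤ n ∧ n ≤ N ∧ |a + n * d - m ^ 2| ≤ x ∧
      x ^ 4 * N ≤ 3000 ^ 4 * d ^ 3 := by
  obtain ⟨m, hm0, hm1, hm2⟩ := exists_floor_sqrt a ha
  refine ⟨0, m, 2 * m, le_rfl, by linarith, ?_, ?_⟩
  · rw [abs_of_nonneg (by linarith)]; linarith
  · have h1 : m ^ 2 ≤ N * d := by linarith
    have h3 := pow_le_pow_left₀ (by positivity) h1 2
    calc (2 * m) ^ 4 * N = 16 * (m ^ 2) ^ 2 * N := by ring
      _ ≤ 16 * (N * d) ^ 2 * N := mul_le_mul_of_nonneg_right (by linarith) (by linarith)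
      _ = 16 * d ^ 2 * N ^ 3 := by ring
      _ ≤ 16 * d ^ 2 * (27000000 * d) := mul_le_mul_of_nonneg_left hsmall (by positivity)
      _ ≤ 3000 ^ 4 * d ^ 3 := by
        have : 0 ≤ d ^ 3 := by positivity
        linarith

/-- For integers `a ≥ 0`, `d ≥ 1`, `N ≥ 1` with `N^2 ≤ a ≤ N*d` and `a ≤ N^2*d/1800`,
some term of the arithmetic progression `a, a+d, ..., a+N*d` is within
`C * d^(3/4) / N^(1/4)` of a perfect square. -/
theorem closest_square_to_AP_bound_two :
    ∃ C : ℝ, 0 < C ∧ ∀ a d N : ℤ, 0 ≤ a → 1 ≤ d → 1 ≤ N →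
      N ^ 2 ≤ a → a ≤ N * d → (a : ℝ) ≤ (N : ℝ) ^ 2 * d / 1800 →
      ∃ n m : ℤ, 0 ≤ n ∧ n ≤ N ∧
        |((a + n * d - m ^ 2 : ℤ) : ℝ)| ≤
          C * (d : ℝ) ^ ((3 : ℝ) / 4) / (N : ℝ) ^ ((1 : ℝ) / 4) := by
  refine ⟨3000, by norm_num, ?_⟩
  intro a d N ha hd hN h1 h2 _
  have hNd : N ≤ d := by
    have : N * N ≤ N * d := by nlinarith
    exact le_of_mul_le_mul_left this (by linarith)
  have hmain : ∃ n m x : ℤ, 0 ≤ n ∧ n ≤ N ∧ |a + n * d - m ^ 2| ≤ x ∧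
      x ^ 4 * N ≤ 3000 ^ 4 * d ^ 3 := by
    rcases le_or_gt (N ^ 3) (27000000 * d) with h | h
    · exact trivial_case a d N ha hd hN h2 h
    · exact core a d N ha hN hNd h2 h
  obtain ⟨n, m, x, hn0, hnN, hx, hx4⟩ := hmain
  refine ⟨n, m, hn0, hnN, ?_⟩
  have hxr : |((a + n * d - m ^ 2 : ℤ) : ℝ)| ≤ (x : ℝ) := by exact_mod_cast hx
  refine hxr.trans (final_bound d N x (by exact_mod_cast hd) (by exact_mod_cast hN) ?_)
  exact_mod_cast hx4
end

section
/- There exists an absolute constant C > 0 such that for all integers a ≥ 0, d ≥ 1, N ≥ 1 satisfying max(N·d, N^{2/3}·d^{4/3}) ≤ a ≤ N^{4/3}·d^{4/3}/200, one has δ ≤ C · a^{1/2} / N^{1/2}; that is, there exist an integer n with 0 ≤ n ≤ N and an integer m with |a + n·d − m²| ≤ C · a^{1/2} / N^{1/2}. -/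
theorem aux_ivt (u : ℕ → ℝ) (x : ℝ) (J : ℕ) (hJ : 0 < J) (h0 : u 0 ≤ x) (h1 : x ≤ u J) :
    ∃ j, j < J ∧ u j ≤ x ∧ x ≤ u (j + 1) := by
  induction J with
  | zero => omega
  | succ k ih =>
    by_cases hk : u k ≤ x
    · exact ⟨k, by omega, hk, h1⟩
    · have hk0 : 0 < k := by
        rcases Nat.eq_zero_or_pos k with h | h
        · subst h; exact absurd h0 hk
        · exact h
      obtain ⟨j, hj, hj1, hj2⟩ := ih hk0 (le_of_lt (not_le.mp hk))
      exact ⟨j, by omega, hj1, hj2⟩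

theorem aux_abstract (g G : ℕ → ℝ) (F0 X η : ℝ) (p : ℤ) (q L : ℕ) (hq : 0 < q)
    (hcop : IsCoprime p (q : ℤ)) (hg : ∀ σ, g σ = F0 + (p : ℝ) / q * σ - G σ)
    (h0 : ∀ σ, σ < q → G σ ≤ X) (h1 : ∀ σ, σ ≤ L → L < σ + q → X + 1 / q ≤ G σ)
    (hs : ∀ σ, σ + q ≤ L → G (σ + q) - G σ ≤ η) (hqL : 2 * q ≤ L) :
    ∃ σ, σ ≤ L ∧ ∃ M : ℤ, |g σ - M| ≤ η := by
  have hqR : (0 : ℝ) < q := by exact_mod_cast hq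
  obtain ⟨u, v, huv⟩ := hcop
  set w : ℤ := ⌈(q : ℝ) * (X - F0)⌉ with hw
  have hw1 : (q : ℝ) * (X - F0) ≤ w := Int.le_ceil _
  have hw2 : (w : ℝ) < q * (X - F0) + 1 := Int.ceil_lt_add_one _
  have hqZ : (0 : ℤ) < q := by exact_mod_cast hq
  obtain ⟨r, hr⟩ : ∃ r : ℕ, (r : ℤ) = (w * u) % q :=
    ⟨((w * u) % q).toNat, Int.toNat_of_nonneg (Int.emod_nonneg _ hqZ.ne')⟩
  have hrq : r < q := by
    have := Int.emod_lt_of_pos (w * u) hqZ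
    omega
  obtain ⟨M, hM⟩ : ∃ M : ℤ, p * r = w + q * M := by
    refine ⟨-(w * v) - p * ((w * u) / q), ?_⟩
    have h2 := Int.emod_add_mul_ediv (w * u) q
    rw [← hr] at h2
    have : (r : ℤ) = w * u - q * (w * u / q) := by linarith
    rw [this]
    linear_combination w * huv
  have hMR : (p : ℝ) * r = w + q * M := by exact_mod_cast hM
  have hx : F0 + (p : ℝ) / q * r - M = F0 + w / q := by
    field_simp
    linarith
  set x : ℝ := F0 + (w : ℝ) / q with hxdef
  have hx1 : X ≤ x := by
    rw [hxdef]
    have : X - F0 ≤ (w : ℝ) / q := by rw [le_div_iff₀ hqR]; linarith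
    linarith
  have hx2 : x ≤ X + 1 / q := by
    rw [hxdef]
    have : (w : ℝ) / q ≤ X - F0 + 1 / q := by
      rw [div_le_iff₀ hqR, add_mul, one_div, inv_mul_cancel₀ hqR.ne']; linarith
    linarith
  have hJe := Nat.div_add_mod (L - r) q
  have hJm := Nat.mod_lt (L - r) hq
  set J := (L - r) / q with hJ
  have hJ0 : 0 < J := Nat.div_pos (by omega) hq
  have hmul : q * J = J * q := Nat.mul_comm _ _
  obtain ⟨j, hj, hj1, hj2⟩ := aux_ivt (fun j => G (r + j * q)) x J hJ0
    (by simpa using (h0 r hrq).trans hx1)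
    (hx2.trans (h1 _ (by omega) (by omega)))
  have hjJ : (j + 1) * q ≤ J * q := Nat.mul_le_mul_right _ hj
  have hexp : (j + 1) * q = j * q + q := by ring
  refine ⟨r + j * q, by omega, M + p * j, ?_⟩
  have hst := hs (r + j * q) (by omega)
  have e1 : r + (j + 1) * q = r + j * q + q := by ring
  simp only [e1] at hj1 hj2
  have e2 : g (r + j * q) - ((M + p * j : ℤ) : ℝ) = x - G (r + j * q) := by
    rw [hg, ← hx]
    push_cast
    field_simp
    ring
  rw [e2, abs_le]
  constructor <;> linarith

theorem aux_E (R y F e : ℝ) (hR : 0 < R) (hy : R ≤ y) (hy2 : y ≤ 3 / 2 * R)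
    (hF : R ≤ F) (hF2 : F ≤ 3 / 2 * R) (h : y ^ 2 = F ^ 2 + e) :
    e ^ 2 / (27 * R ^ 3) ≤ (y - F) ^ 2 / (2 * F) ∧ (y - F) ^ 2 / (2 * F) ≤ e ^ 2 / (8 * R ^ 3) := by
  have he : e = (y - F) * (y + F) := by linear_combination -h
  have hF0 : 0 < F := by linarith
  rw [he, mul_pow]
  constructor
  · rw [div_le_div_iff₀ (by positivity) (by positivity), mul_assoc]
    refine mul_le_mul_of_nonneg_left ?_ (sq_nonneg _)
    have h1 : (y + F) ^ 2 ≤ (3 * R) ^ 2 := pow_le_pow_left₀ (by linarith) (by linarith) 2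
    have h2 : (y + F) ^ 2 * (2 * F) ≤ (3 * R) ^ 2 * (3 * R) :=
      mul_le_mul h1 (by linarith) (by linarith) (by positivity)
    linarith
  · rw [div_le_div_iff₀ (by positivity) (by positivity), mul_assoc]
    refine mul_le_mul_of_nonneg_left ?_ (sq_nonneg _)
    have h1 : (2 * R) ^ 2 ≤ (y + F) ^ 2 := pow_le_pow_left₀ (by linarith) (by linarith) 2
    have h2 : (2 * R) ^ 2 * (2 * R) ≤ (y + F) ^ 2 * (2 * F) :=
      mul_le_mul h1 (by linarith) (by linarith) (by positivity)
    linarith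

theorem aux_abs (R y F e : ℝ) (hR : 0 < R) (hy : R ≤ y) (hF : R ≤ F) (h : y ^ 2 = F ^ 2 + e) :
    |y - F| ≤ |e| / (2 * R) := by
  have he : e = (y - F) * (y + F) := by linear_combination -h
  rw [he, abs_mul, le_div_iff₀ (by positivity), abs_of_pos (show 0 < y + F by linarith)]
  exact mul_le_mul_of_nonneg_left (by linarith) (abs_nonneg _)

theorem aux_step (R y y' F e e' : ℝ) (hR : 0 < R) (hy : R ≤ y) (hy' : R ≤ y')
    (hF : R ≤ F) (h : y ^ 2 = F ^ 2 + e) (h' : y' ^ 2 = F ^ 2 + e') :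
    (y' - F) ^ 2 / (2 * F) - (y - F) ^ 2 / (2 * F) ≤ |e' - e| * (|e| + |e'|) / (8 * R ^ 3) := by
  have hF0 : 0 < F := by linarith
  have h1 := aux_abs R y F e hR hy hF h
  have h2 := aux_abs R y' F e' hR hy' hF h'
  have h3 := aux_abs R y' y (e' - e) hR hy' hy (by linarith)
  have h4 : |(y' - F) + (y - F)| ≤ (|e| + |e'|) / (2 * R) := by
    refine (abs_add_le _ _).trans ?_
    rw [add_div]; linarith
  have h5 : (y' - F) ^ 2 - (y - F) ^ 2 ≤ |e' - e| / (2 * R) * ((|e| + |e'|) / (2 * R)) := by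
    have : (y' - F) ^ 2 - (y - F) ^ 2 = (y' - y) * ((y' - F) + (y - F)) := by ring
    rw [this]
    refine (le_abs_self _).trans ?_
    rw [abs_mul]
    exact mul_le_mul h3 h4 (abs_nonneg _) (by positivity)
  rw [← sub_div]
  calc _ ≤ (|e' - e| / (2 * R) * ((|e| + |e'|) / (2 * R))) / (2 * F) := by gcongr
    _ ≤ (|e' - e| / (2 * R) * ((|e| + |e'|) / (2 * R))) / (2 * R) := by gcongr
    _ = _ := by field_simp; ring

/-- derivative drop -/
theorem aux_drop (R y y' e d : ℝ) (hR : 0 < R) (hd : 0 < d) (he : 0 ≤ e) (hy : R ≤ y)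
    (hy2 : y ≤ 3 / 2 * R) (hy' : R ≤ y') (hy2' : y' ≤ 3 / 2 * R) (h : y' ^ 2 = y ^ 2 + e) :
    d * e * 2 / (27 * R ^ 3) ≤ d / (2 * y) - d / (2 * y') ∧
      d / (2 * y) - d / (2 * y') ≤ d * e / (4 * R ^ 3) := by
  have y0 : 0 < y := by linarith
  have y0' : 0 < y' := by linarith
  have hee : e = (y' - y) * (y' + y) := by linear_combination -h
  have hd1 : d / (2 * y) - d / (2 * y') = d * e / (2 * y * y' * (y + y')) := by
    rw [hee]; field_simp; ring
  rw [hd1]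
  constructor
  · rw [div_le_div_iff₀ (by positivity) (by positivity), mul_assoc (d * e)]
    refine mul_le_mul_of_nonneg_left ?_ (by positivity)
    have : 2 * y * y' * (y + y') ≤ 2 * (3 / 2 * R) * (3 / 2 * R) * (3 / 2 * R + 3 / 2 * R) := by gcongr
    nlinarith [pow_pos hR 3]
  · refine div_le_div_of_nonneg_left (by positivity) (by positivity) ?_
    have : 2 * R * R * (R + R) ≤ 2 * y * y' * (y + y') := by gcongr
    nlinarith

theorem aux_rho (N k : ℕ) (R d lam S : ℝ) (hN : 400 ≤ N) (hk1 : 4 * k ≤ N) (hk2 : N ≤ 5 * k)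
    (hR : 0 < R) (hd : 0 < d) (hS : S = √(N : ℝ)) (hlam : lam = d ^ 2 / (4 * R ^ 3))
    (h1 : (N : ℝ) * d ≤ R ^ 2) (h2 : lam * N ≤ 1 / 4)
    (f : ℝ → ℝ) (hf : ∀ x, f x = √(R ^ 2 + d * x)) 
    (hfs : ∀ x : ℝ, 0 ≤ x → x ≤ N → R ≤ f x ∧ f x ≤ 3 / 2 * R ∧ f x ^ 2 = R ^ 2 + d * x) :
    ∃ (t : ℕ) (ρ : ℚ), k ≤ t ∧ t ≤ 3 * k ∧ (ρ.den : ℝ) ≤ S ∧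
      ρ.den * |d / (2 * f t) - ρ| ≤ 10 / S ∧ ρ.den * lam * N ≤ 10 := by
  have hNR : (400 : ℝ) ≤ N := by exact_mod_cast hN
  have hN0 : (0 : ℝ) < N := by linarith
  have hS0 : 0 < S := by rw [hS]; positivity
  have hSS : S * S = N := by rw [hS]; exact Real.mul_self_sqrt hN0.le
  have hl0 : 0 < lam := by rw [hlam]; positivity
  have hk1R : 4 * (k : ℝ) ≤ N := by exact_mod_cast hk1
  have hk2R : (N : ℝ) ≤ 5 * k := by exact_mod_cast hk2
  by_cases hc : lam * N * S ≤ 10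
  · have hn : 0 < Nat.sqrt N := Nat.sqrt_pos.mpr (by omega)
    obtain ⟨ρ, hρ1, hρ2⟩ := Real.exists_rat_abs_sub_le_and_den_le
      (d / (2 * f ((2 * k : ℕ) : ℝ))) hn
    have hq : (0 : ℝ) < ρ.den := by exact_mod_cast ρ.pos
    have hle : (ρ.den : ℝ) ≤ S := by
      have : ((Nat.sqrt N : ℕ) : ℝ) ≤ √(N : ℝ) := Real.nat_sqrt_le_real_sqrt
      rw [hS]
      exact le_trans (by exact_mod_cast hρ2) this
    refine ⟨2 * k, ρ, by omega, by omega, hle, ?_, ?_⟩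
    · have hS1 : S ≤ Nat.sqrt N + 1 := by rw [hS]; exact Real.real_sqrt_le_nat_sqrt_succ
      calc _ ≤ (ρ.den : ℝ) * (1 / ((Nat.sqrt N + 1) * ρ.den)) := by gcongr
        _ = 1 / (Nat.sqrt N + 1 : ℝ) := by field_simp
        _ ≤ 1 / S := by gcongr
        _ ≤ 10 / S := by gcongr; norm_num
    · calc _ ≤ S * lam * N := by gcongr
        _ ≤ 10 := by linarith
  · push Not at hc
    have hlN : 0 < lam * N := by positivity
    set Q : ℕ := ⌈9 / (lam * N)⌉₊ with hQ
    have hQ1 : 9 / (lam * N) ≤ Q := Nat.le_ceil _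
    have hQ2 : (Q : ℝ) < 9 / (lam * N) + 1 := Nat.ceil_lt_add_one (by positivity)
    have hQ0 : (0 : ℝ) < Q := lt_of_lt_of_le (by positivity) hQ1
    have hQ3 : Q * (lam * N) ≤ 10 := by
      have : (9 / (lam * N) + 1) * (lam * N) = 9 + lam * N := by field_simp
      nlinarith
    have hQ4 : 9 ≤ Q * (lam * N) := by rwa [div_le_iff₀ hlN] at hQ1
    obtain ⟨a1, a2, a3⟩ := hfs k (by positivity) (by linarith)
    obtain ⟨b1, b2, b3⟩ := hfs (3 * k : ℕ) (by positivity) (by push_cast; linarith)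
    have hdr := (aux_drop R (f k) (f (3 * k : ℕ)) (d * (2 * k)) d hR hd (by positivity) a1 a2 b1 b2
      (by rw [a3, b3]; push_cast; ring)).1
    have hdr2 : lam * N / 9 ≤ d / (2 * f k) - d / (2 * f (3 * k : ℕ)) := by
      refine le_trans ?_ hdr
      have : d * (d * (2 * k)) * 2 / (27 * R ^ 3) = lam * k * (16 / 27) := by
        rw [hlam]; field_simp; ring
      rw [this]
      nlinarith
    set c : ℤ := ⌊Q * (d / (2 * f k))⌋ with hcdef
    have hc1 : (c : ℝ) ≤ Q * (d / (2 * f k)) := Int.floor_le _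
    have hc2 : Q * (d / (2 * f k)) < c + 1 := Int.lt_floor_add_one _
    set ρ : ℚ := (c : ℚ) / (Q : ℚ) with hρ
    have hρR : (ρ : ℝ) = c / Q := by rw [hρ]; push_cast; rfl
    have hρ1 : (ρ : ℝ) ≤ d / (2 * f k) := by
      rw [hρR, div_le_iff₀ hQ0]; linarith
    have hρ2 : d / (2 * f (3 * k : ℕ)) ≤ ρ := by
      rw [hρR, le_div_iff₀ hQ0]
      nlinarith
    have hden : ρ.den ≤ Q := by
      have hdv : (ρ.den : ℤ) ∣ (Q : ℤ) := by
        have := Rat.den_dvd c (Q : ℤ)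
        have e : ρ = Rat.divInt c (Q : ℤ) := by
          rw [Rat.divInt_eq_div, hρ, Int.cast_natCast]
        rw [e]
        exact this
      exact Nat.le_of_dvd (by exact_mod_cast hQ0) (by exact_mod_cast hdv)
    have hdenR : (ρ.den : ℝ) ≤ Q := by exact_mod_cast hden
    have hq : (0 : ℝ) < ρ.den := by exact_mod_cast ρ.pos
    have hqK : ρ.den * (lam * N) ≤ 10 := le_trans (by gcongr) hQ3
    have hk0 : 0 < k := by omega
    obtain ⟨j, hj, hj1, hj2⟩ := aux_ivt (fun j => -(d / (2 * f ((k + j : ℕ) : ℝ)))) (-ρ) (2 * k)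
      (by omega) (by simpa using hρ1)
      (by
        have e : k + 2 * k = 3 * k := by ring
        simp only [e]; linarith)
    have hjN : ((k + j : ℕ) : ℝ) + 1 ≤ N := by
      have : k + j + 1 ≤ N := by omega
      exact_mod_cast this
    obtain ⟨a1, a2, a3⟩ := hfs (k + j : ℕ) (by positivity) (by linarith)
    obtain ⟨b1, b2, b3⟩ := hfs (k + (j + 1) : ℕ) (by positivity) (by push_cast at hjN ⊢; linarith)
    have hdr := (aux_drop R (f (k + j : ℕ)) (f (k + (j + 1) : ℕ)) d d hR hd hd.le a1 a2 b1 b2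
      (by rw [a3, b3]; push_cast; ring)).2
    have hll : d * d / (4 * R ^ 3) = lam := by rw [hlam]; ring
    rw [hll] at hdr
    refine ⟨k + j, ρ, by omega, by omega, ?_, ?_, by linarith⟩
    · by_contra hcon
      push Not at hcon
      have hx : lam * N * S ≤ lam * N * ρ.den := mul_le_mul_of_nonneg_left hcon.le hlN.le
      linarith
    · have : |d / (2 * f (k + j : ℕ)) - ρ| ≤ lam := by
        rw [abs_le]; constructor <;> linarith
      have hS1 : 1 ≤ S := by
        rw [hS]; exact Real.one_le_sqrt.mpr (by linarith)
      have hSN : S ≤ N := by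
        rw [← hSS]; exact le_mul_of_one_le_left hS0.le hS1
      calc _ ≤ ρ.den * lam := by gcongr
        _ ≤ 10 / N := by rw [le_div_iff₀ hN0]; linarith
        _ ≤ 10 / S := by gcongr

theorem aux_L (N k q : ℕ) (lam S : ℝ) (hN : 700 ≤ N) (hk2 : N ≤ 5 * k) (hq : 0 < q)
    (hS0 : 0 < S) (hSS : S * S = N) (hl0 : 0 < lam) (h3 : 700 ≤ lam * N ^ 2)
    (hqS : (q : ℝ) ≤ S) (hqK : q * lam * N ≤ 10) :
    ∃ L : ℕ, L ≤ k ∧ 4 * q ≤ L ∧ 20 ≤ q * lam * (L : ℝ) ^ 2 ∧ q * lam * L ≤ 50 / S := by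
  have hNR : (700 : ℝ) ≤ N := by exact_mod_cast hN
  have hk2R : (N : ℝ) ≤ 5 * k := by exact_mod_cast hk2
  have hq1 : (1 : ℝ) ≤ q := by exact_mod_cast hq
  have hS20 : 20 ≤ S := by nlinarith
  by_cases hc : q * lam * k ≤ 50 / S
  · refine ⟨k, le_rfl, ?_, ?_, hc⟩
    · have : (4 : ℝ) * q ≤ k := by nlinarith
      exact_mod_cast this
    · have h5 : (N : ℝ) ^ 2 ≤ (5 * k) ^ 2 := by gcongr
      have h6 : lam * (N : ℝ) ^ 2 ≤ lam * (5 * k) ^ 2 := by gcongr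
      have h7 : 28 ≤ lam * (k : ℝ) ^ 2 := by nlinarith
      nlinarith
  · push Not at hc
    have hql : 0 < q * lam := by positivity
    set x := 50 / S / (q * lam) with hx
    have hxe : q * lam * x = 50 / S := by rw [hx]; field_simp
    have hx0 : 0 < x := by positivity
    have hx5 : 5 * (q : ℝ) ≤ x := by
      rw [hx, le_div_iff₀ hql, le_div_iff₀ hS0]
      have : q * lam * (q * S) ≤ q * lam * (S * S) := by gcongr
      rw [hSS] at this
      linarith
    have hL1 : (⌊x⌋₊ : ℝ) ≤ x := Nat.floor_le hx0.le
    have hL2 : x < ⌊x⌋₊ + 1 := Nat.lt_floor_add_one x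
    have hxk : x < k := by
      by_contra hcon
      push Not at hcon
      nlinarith
    refine ⟨⌊x⌋₊, ?_, ?_, ?_, ?_⟩
    · have : (⌊x⌋₊ : ℝ) ≤ k := by linarith
      exact_mod_cast this
    · apply Nat.le_floor
      push_cast; linarith
    · have h7 : x / 2 ≤ ⌊x⌋₊ := by linarith
      have h8 : (x / 2) ^ 2 ≤ (⌊x⌋₊ : ℝ) ^ 2 := by gcongr
      have h9 : 80 ≤ q * lam * x ^ 2 := by
        have e : q * lam * x ^ 2 = 2500 / (q * lam * N) := by
          rw [hx, ← hSS]; field_simp; norm_num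
        rw [e, le_div_iff₀ (by positivity)]
        linarith
      calc (20 : ℝ) ≤ q * lam * (x / 2) ^ 2 := by linarith
        _ ≤ _ := by gcongr
    · calc _ ≤ q * lam * x := by gcongr
        _ = _ := hxe

theorem aux_main (N : ℕ) (R d lam S : ℝ) (hN : 700 ≤ N)
    (hR : 0 < R) (hd : 0 < d) (hS : S = √(N : ℝ)) (hlam : lam = d ^ 2 / (4 * R ^ 3))
    (h1 : (N : ℝ) * d ≤ R ^ 2) (h2 : lam * N ≤ 1 / 4) (h3 : 700 ≤ lam * N ^ 2) :
    ∃ n M : ℤ, 0 ≤ n ∧ n ≤ N ∧ |√(R ^ 2 + d * n) - M| ≤ 60 / S := by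
  have hNR : (700 : ℝ) ≤ N := by exact_mod_cast hN
  have hN0 : (0 : ℝ) < N := by linarith
  have hS0 : 0 < S := by rw [hS]; positivity
  have hSS : S * S = N := by rw [hS]; exact Real.mul_self_sqrt hN0.le
  have hl0 : 0 < lam := by rw [hlam]; positivity
  obtain ⟨f, hf⟩ : ∃ f : ℝ → ℝ, ∀ x, f x = √(R ^ 2 + d * x) := ⟨_, fun _ => rfl⟩
  have hfs : ∀ x : ℝ, 0 ≤ x → x ≤ N → R ≤ f x ∧ f x ≤ 3 / 2 * R ∧ f x ^ 2 = R ^ 2 + d * x := by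
    intro x hx hxN
    have h0 : 0 ≤ d * x := by positivity
    have h4 : d * x ≤ R ^ 2 := le_trans (by nlinarith) h1
    rw [hf]
    refine ⟨Real.le_sqrt_of_sq_le (by linarith), ?_, Real.sq_sqrt (by positivity)⟩
    rw [Real.sqrt_le_left (by positivity)]
    nlinarith
  obtain ⟨k, hk1, hk2⟩ : ∃ k : ℕ, 4 * k ≤ N ∧ N ≤ 5 * k := ⟨N / 4, by omega, by omega⟩
  obtain ⟨t, ρ, ht1, ht2, hqS, hb, hqK⟩ := aux_rho N k R d lam S (by omega) hk1 hk2 hR hd hS hlam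
    h1 h2 f hf hfs
  obtain ⟨L, hLk, hL4, hL20, hL50⟩ := aux_L N k ρ.den lam S hN hk2 ρ.pos hS0 hSS hl0 h3 hqS hqK
  have hρR : (ρ : ℝ) = ρ.num / ρ.den := by exact_mod_cast (Rat.num_div_den ρ).symm
  have hcopr : IsCoprime ρ.num (ρ.den : ℤ) := by
    rw [Int.isCoprime_iff_gcd_eq_one]; exact ρ.reduced
  have hq0 := ρ.pos
  generalize ρ.den = q at *
  have hqR : (0 : ℝ) < q := by exact_mod_cast hq0
  set β := d / (2 * f t) - ρ with hβ
  obtain ⟨ε, hε, hεβ⟩ : ∃ ε : ℤ, (ε = 1 ∨ ε = -1) ∧ (ε : ℝ) * β = -|β| := by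
    rcases le_total β 0 with h | h
    · exact ⟨1, Or.inl rfl, by rw [abs_of_nonpos h]; simp⟩
    · exact ⟨-1, Or.inr rfl, by rw [abs_of_nonneg h]; simp⟩
  have hε2 : (ε : ℝ) ^ 2 = 1 := by rcases hε with h | h <;> simp [h]
  have hεa : |(ε : ℝ)| = 1 := by rcases hε with h | h <;> simp [h]
  have hεn : ∀ σ : ℕ, σ ≤ L → 0 ≤ (t : ℤ) + ε * σ ∧ (t : ℤ) + ε * σ ≤ N := by
    intro σ hσ
    rcases hε with h | h <;> rw [h] <;> omega
  obtain ⟨c1, c2, c3⟩ := hfs t (by positivity) (by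
    have : t ≤ N := by omega
    exact_mod_cast this)
  set F := f t with hF
  have hF0 : 0 < F := by linarith
  set g : ℕ → ℝ := fun σ => f (((t : ℤ) + ε * σ : ℤ) : ℝ) with hg
  have hgs : ∀ σ : ℕ, σ ≤ L → R ≤ g σ ∧ g σ ≤ 3 / 2 * R ∧ g σ ^ 2 = F ^ 2 + d * (ε * σ) := by
    intro σ hσ
    obtain ⟨n1, n2⟩ := hεn σ hσ
    obtain ⟨b1, b2, b3⟩ := hfs (((t : ℤ) + ε * σ : ℤ) : ℝ) (by exact_mod_cast n1) (by exact_mod_cast n2)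
    refine ⟨b1, b2, ?_⟩
    rw [c3]
    simp only [hg]
    rw [b3]; push_cast; ring
  set G : ℕ → ℝ := fun σ => F + ((ε * ρ.num : ℤ) : ℝ) / q * σ - g σ with hG
  have hGE : ∀ σ : ℕ, σ ≤ L → G σ = |β| * σ + (g σ - F) ^ 2 / (2 * F) := by
    intro σ hσ
    obtain ⟨b1, b2, b3⟩ := hgs σ hσ
    have e1 : (g σ - F) ^ 2 / (2 * F) = F + d / (2 * F) * (ε * σ) - g σ := by
      field_simp
      linear_combination b3
    have e2 : |β| = -(ε * (d / (2 * F) - ρ)) := by rw [← hβ]; linarith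
    rw [e1, e2, hρR]
    simp only [hG]
    push_cast
    ring
  have hE : ∀ σ : ℕ, σ ≤ L → 4 / 27 * lam * (σ : ℝ) ^ 2 ≤ (g σ - F) ^ 2 / (2 * F) ∧
      (g σ - F) ^ 2 / (2 * F) ≤ lam * (σ : ℝ) ^ 2 / 2 := by
    intro σ hσ
    obtain ⟨b1, b2, b3⟩ := hgs σ hσ
    obtain ⟨x1, x2⟩ := aux_E R (g σ) F _ hR b1 b2 c1 c2 b3
    have e : (d * (ε * σ)) ^ 2 = d ^ 2 * (σ : ℝ) ^ 2 := by
      rw [mul_pow, mul_pow, hε2]; ring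
    rw [e] at x1 x2
    refine ⟨le_trans (le_of_eq ?_) x1, le_trans x2 (le_of_eq ?_)⟩
    · rw [hlam]; field_simp
    · rw [hlam]; field_simp; ring
  have hβ0 := abs_nonneg β
  have hL4R : 4 * (q : ℝ) ≤ L := by exact_mod_cast hL4
  obtain ⟨σ, hσ, M, hM⟩ := aux_abstract g G F (|β| * q + lam * (q : ℝ) ^ 2 / 2) (60 / S)
    (ε * ρ.num) q L hq0 (by
      rcases hε with h | h
      · rw [h, one_mul]; exact hcopr
      · rw [h, neg_one_mul]; exact hcopr.neg_left)
    (by intro σ; simp only [hG]; ring)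
    (by
      intro σ hσ
      have hσL : σ ≤ L := by omega
      have hσq : (σ : ℝ) ≤ q := by exact_mod_cast hσ.le
      rw [hGE σ hσL]
      refine add_le_add (by gcongr) ((hE σ hσL).2.trans ?_)
      gcongr)
    (by
      intro σ hσ hσ2
      rw [hGE σ hσ]
      have h5 : (L : ℝ) ≤ σ + q := by exact_mod_cast hσ2.le
      have h6 := (hE σ hσ).1
      have h7 : |β| * q ≤ |β| * σ := by gcongr; linarith
      have h8 : (3 / 4 * (L : ℝ)) ^ 2 ≤ (σ : ℝ) ^ 2 := by gcongr; linarith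
      have h9 : (q : ℝ) ^ 2 ≤ (L / 4 : ℝ) ^ 2 := by gcongr; linarith
      have h10 : lam * (3 / 4 * (L : ℝ)) ^ 2 ≤ lam * (σ : ℝ) ^ 2 := by gcongr
      have h11 : lam * (q : ℝ) ^ 2 ≤ lam * (L / 4 : ℝ) ^ 2 := by gcongr
      have h12 : 1 / (q : ℝ) ≤ lam * (L : ℝ) ^ 2 / 20 := by
        rw [div_le_iff₀ hqR]; linarith
      have h13 : 0 ≤ lam * (L : ℝ) ^ 2 := by positivity
      linarith)
    (by
      intro σ hσ
      have hσ1 : σ ≤ L := by omega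
      rw [hGE _ hσ, hGE _ hσ1]
      obtain ⟨b1, b2, b3⟩ := hgs σ hσ1
      obtain ⟨b1', b2', b3'⟩ := hgs (σ + q) hσ
      have hst := aux_step R (g σ) (g (σ + q)) F _ _ hR b1 b1' c1 b3 b3'
      have hσR : (σ : ℝ) + q ≤ L := by exact_mod_cast hσ
      have hσ0 : (0 : ℝ) ≤ σ := by positivity
      have e1 : |d * (ε * ((σ + q : ℕ) : ℝ)) - d * (ε * σ)| = d * q := by
        have : d * (ε * ((σ + q : ℕ) : ℝ)) - d * (ε * σ) = ε * (d * q) := by push_cast; ring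
        rw [this, abs_mul, hεa, one_mul, abs_of_pos (by positivity)]
      have e2 : ∀ s : ℕ, |d * (ε * (s : ℝ))| = d * s := by
        intro s
        rw [abs_mul, abs_mul, hεa, one_mul, abs_of_pos hd, abs_of_nonneg (by positivity)]
      rw [e1, e2, e2] at hst
      have e3 : d * q * (d * σ + d * ((σ + q : ℕ) : ℝ)) / (8 * R ^ 3)
          = q * lam * ((2 * σ + q) / 2) := by
        rw [hlam]; push_cast; field_simp; ring
      rw [e3] at hst
      have h5 : q * lam * ((2 * σ + q) / 2) ≤ q * lam * L := by gcongr; linarith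
      have h6 : 60 / S = 10 / S + 50 / S := by ring
      push_cast
      rw [h6]
      linarith)
    (by omega)
  obtain ⟨n1, n2⟩ := hεn σ hσ
  refine ⟨(t : ℤ) + ε * σ, M, n1, n2, ?_⟩
  rw [← hf]
  exact hM

/-- For integers `a ≥ 0`, `d ≥ 1`, `N ≥ 1` with
`max (N*d) (N^(2/3)*d^(4/3)) ≤ a ≤ N^(4/3)*d^(4/3)/200`,
some term of the arithmetic progression `a, a+d, ..., a+N*d` is within
`C * a^(1/2) / N^(1/2)` of a perfect square. -/
theorem closest_square_to_AP_bound_four :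
    ∃ C : ℝ, 0 < C ∧ ∀ a d N : ℤ, 0 ≤ a → 1 ≤ d → 1 ≤ N →
      max ((N : ℝ) * d) ((N : ℝ) ^ ((2 : ℝ) / 3) * (d : ℝ) ^ ((4 : ℝ) / 3)) ≤ (a : ℝ) →
      (a : ℝ) ≤ (N : ℝ) ^ ((4 : ℝ) / 3) * (d : ℝ) ^ ((4 : ℝ) / 3) / 200 →
      ∃ n m : ℤ, 0 ≤ n ∧ n ≤ N ∧
        |((a + n * d - m ^ 2 : ℤ) : ℝ)| ≤
          C * (a : ℝ) ^ ((1 : ℝ) / 2) / (N : ℝ) ^ ((1 : ℝ) / 2) := by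
  refine ⟨4000, by norm_num, ?_⟩
  intro a d N ha hd hN hmax hub
  have h1 := (le_max_left _ _).trans hmax
  have h2 := (le_max_right _ _).trans hmax
  rw [← Real.sqrt_eq_rpow, ← Real.sqrt_eq_rpow]
  lift N to ℕ using (by omega)
  have hNN : 1 ≤ N := by exact_mod_cast hN
  simp only [Int.cast_natCast] at *
  have hdR : (1 : ℝ) ≤ d := by exact_mod_cast hd
  have hd0 : (0 : ℝ) < d := by linarith
  have hN1 : (1 : ℝ) ≤ N := by exact_mod_cast hNN
  have hN0 : (0 : ℝ) < N := by linarith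
  have ha1 : (1 : ℝ) ≤ a := by nlinarith
  set R := √(a : ℝ) with hR
  set S := √(N : ℝ) with hS
  have hRR : R ^ 2 = a := Real.sq_sqrt (by linarith)
  have hSS : S ^ 2 = N := Real.sq_sqrt hN0.le
  have hS0 : 0 < S := by rw [hS]; positivity
  have hR1 : 1 ≤ R := by rw [hR]; exact Real.one_le_sqrt.mpr ha1
  have hS1 : 1 ≤ S := by rw [hS]; exact Real.one_le_sqrt.mpr hN1
  have hR0 : 0 < R := by linarith
  by_cases hN7 : N < 700
  · have hS27 : S ≤ 27 := by
      rw [hS, Real.sqrt_le_left (by norm_num)]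
      have : (N : ℝ) < 700 := by exact_mod_cast hN7
      linarith
    set m : ℤ := ⌊R⌋ with hm
    have m1 : (m : ℝ) ≤ R := Int.floor_le _
    have m2 : R < m + 1 := Int.lt_floor_add_one _
    have m0 : (0 : ℝ) ≤ m := by exact_mod_cast Int.floor_nonneg.mpr hR0.le
    refine ⟨0, m, le_rfl, by omega, ?_⟩
    push_cast
    rw [← hRR, zero_mul, add_zero, le_div_iff₀ hS0]
    have h5 : |R ^ 2 - (m : ℝ) ^ 2| ≤ 2 * R := by
      rw [abs_le]; constructor <;> nlinarith
    calc _ ≤ 2 * R * 27 := by gcongr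
      _ ≤ _ := by linarith
  · have hR3 : ((a : ℝ)) ^ ((3 : ℝ) / 2) = R ^ 3 := by
      rw [hR, Real.sqrt_eq_rpow, ← Real.rpow_natCast, ← Real.rpow_mul (by linarith)]
      norm_num
    have h2' : (N : ℝ) * (d : ℝ) ^ 2 ≤ R ^ 3 := by
      have := Real.rpow_le_rpow (by positivity) h2 (show (0 : ℝ) ≤ 3 / 2 by norm_num)
      rw [hR3, Real.mul_rpow (by positivity) (by positivity), ← Real.rpow_mul hN0.le,
        ← Real.rpow_mul hd0.le] at this
      norm_num at this
      exact this
    have h3' : 2800 * R ^ 3 ≤ (N : ℝ) ^ 2 * (d : ℝ) ^ 2 := by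
      have h4 : (a : ℝ) * 200 ≤ (N : ℝ) ^ ((4 : ℝ) / 3) * (d : ℝ) ^ ((4 : ℝ) / 3) := by linarith
      have := Real.rpow_le_rpow (by positivity) h4 (show (0 : ℝ) ≤ 3 / 2 by norm_num)
      rw [Real.mul_rpow (by positivity) (by positivity),
        Real.mul_rpow (by positivity) (by positivity), hR3, ← Real.rpow_mul hN0.le,
        ← Real.rpow_mul hd0.le] at this
      norm_num at this
      have h200 : (2800 : ℝ) ≤ (200 : ℝ) ^ ((3 : ℝ) / 2) := by
        have e : (200 : ℝ) ^ ((3 : ℝ) / 2) = √((200 : ℝ) ^ 3) := by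
          rw [Real.sqrt_eq_rpow, ← Real.rpow_natCast, ← Real.rpow_mul (by norm_num)]
          norm_num
        rw [e]
        exact Real.le_sqrt_of_sq_le (by norm_num)
      have h6 : 2800 * R ^ 3 ≤ (200 : ℝ) ^ ((3 : ℝ) / 2) * R ^ 3 := by gcongr
      linarith
    obtain ⟨n, M, n1, n2, hM⟩ := aux_main N R d ((d : ℝ) ^ 2 / (4 * R ^ 3)) S (by omega) hR0 hd0 hS rfl
      (by rw [hRR]; exact h1)
      (by
        rw [div_mul_eq_mul_div, div_le_iff₀ (by positivity)]
        linarith)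
      (by
        rw [div_mul_eq_mul_div, le_div_iff₀ (by positivity)]
        linarith)
    refine ⟨n, M, n1, n2, ?_⟩
    have n1R : (0 : ℝ) ≤ n := by exact_mod_cast n1
    have n2R : (n : ℝ) ≤ N := by exact_mod_cast n2
    set y := √(R ^ 2 + d * n) with hy
    have hdn : 0 ≤ (d : ℝ) * n := by positivity
    have hyy : y ^ 2 = a + n * d := by
      rw [hy, Real.sq_sqrt (by positivity), hRR]; ring
    have hy0 : 0 ≤ y := Real.sqrt_nonneg _
    have hy2 : y ≤ 2 * R := by
      rw [hy, Real.sqrt_le_left (by positivity)]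
      nlinarith
    push_cast
    rw [← hyy]
    have e : y ^ 2 - (M : ℝ) ^ 2 = (y - M) * (2 * y - (y - M)) := by ring
    have h60 : 60 / S ≤ 60 * R := by
      rw [div_le_iff₀ hS0]; nlinarith
    have h7 : |2 * y - (y - M)| ≤ 64 * R := by
      have h8 := abs_le.mp hM
      rw [abs_le]; constructor <;> linarith
    rw [e, abs_mul]
    calc _ ≤ 60 / S * (64 * R) := mul_le_mul hM h7 (abs_nonneg _) (by positivity)
      _ = 3840 * R / S := by ring
      _ ≤ 4000 * R / S := by gcongr; norm_num
end

section
/- (Huxley) Let M ≥ 12 be a positive integer and let I be a closed interval of length M with integer endpoints. Let f be a real function, twice continuously differentiable on I, and suppose there are real parameters C ≥ 1 and Δ ≤ 1 such that 144/M² ≤ Δ/C ≤ |f''(x)| ≤ C·Δ ≤ 1 for all x in I. Let ε be a real number with max(3·√(C³·Δ), 6·C²·√(2/M)) ≤ ε ≤ 1/4. Then there exist distinct integers m₁, ..., m_R in I such that ‖f(m_r)‖ ≤ ε for 1 ≤ r ≤ R, where R ≥ min(ε⁴·M/(2⁴·3⁴·C⁷·Δ), ε·M/(2⁷·3²·C⁴)).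 -/
/-- Integers in a residue class inside an interval of length at least `q`. -/
lemma hux_class_count (q : ℕ) (hq : 0 < q) (m0 : ℤ) (a b : ℝ) (hab : (q : ℝ) ≤ b - a) :
    ∃ S : Finset ℤ, (∀ m ∈ S, a ≤ (m : ℝ) ∧ (m : ℝ) ≤ b ∧ ∃ k : ℤ, m = m0 + q * k) ∧
      (b - a) / (2 * q) ≤ (S.card : ℝ) := by
  have hq' : (0 : ℝ) < q := by exact_mod_cast hq
  set x := (a - m0) / q with hx
  set y := (b - m0) / q with hy
  have hxy : y - x = (b - a) / q := by rw [hx, hy]; ring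
  have hL : 1 ≤ y - x := by rw [hxy, le_div_iff₀ hq']; linarith
  refine ⟨(Finset.Icc ⌈x⌉ ⌊y⌋).image (fun k : ℤ => m0 + q * k), ?_, ?_⟩
  · intro m hm
    simp only [Finset.mem_image, Finset.mem_Icc] at hm
    obtain ⟨k, ⟨h1, h2⟩, rfl⟩ := hm
    have h1' : x ≤ k := Int.ceil_le.mp h1
    have h2' : (k : ℝ) ≤ y := Int.le_floor.mp h2
    rw [hx, div_le_iff₀ hq'] at h1'
    rw [hy, le_div_iff₀ hq'] at h2'
    refine ⟨?_, ?_, k, rfl⟩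
    · push_cast; linarith
    · push_cast; linarith
  · rw [Finset.card_image_of_injective]
    · rw [Int.card_Icc]
      have h1 : y - 1 < ⌊y⌋ := Int.sub_one_lt_floor y
      have h2 : (⌈x⌉ : ℝ) < x + 1 := Int.ceil_lt_add_one x
      have h3 : ((⌊y⌋ + 1 - ⌈x⌉ : ℤ) : ℝ) > y - x - 1 := by push_cast; linarith
      have h4 : (0 : ℤ) < ⌊y⌋ + 1 - ⌈x⌉ := by
        have : (0 : ℝ) < ((⌊y⌋ + 1 - ⌈x⌉ : ℤ) : ℝ) := by linarith
        exact_mod_cast this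
      have h5 : (((⌊y⌋ + 1 - ⌈x⌉).toNat : ℕ) : ℝ) = ((⌊y⌋ + 1 - ⌈x⌉ : ℤ) : ℝ) := by
        rw [← Int.cast_natCast, Int.toNat_of_nonneg h4.le]
      rw [h5]
      have h6 : (1 : ℝ) ≤ ((⌊y⌋ + 1 - ⌈x⌉ : ℤ) : ℝ) := by exact_mod_cast h4
      have h7 : (b - a) / (2 * q) = (y - x) / 2 := by rw [hxy]; field_simp
      rw [h7]
      rcases le_total (y - x) 2 with h | h <;> linarith
    · intro k l hkl
      simp only [add_right_inj] at hkl
      exact mul_left_cancel₀ (by exact_mod_cast hq.ne') hkl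

/-- Per-arc lemma, increasing case. -/
lemma hux_arc (f d : ℝ → ℝ) (u v μ ε : ℝ) (r : ℚ) (hμ : 0 < μ) (hε : 0 < ε)
    (hε4 : ε ≤ 1 / 4) (hq : 2 * ε * r.den ≤ 1)
    (hfc : ContinuousOn f (Set.Icc u v))
    (htan : ∀ x ∈ Set.Icc u v, ∀ y ∈ Set.Icc u v,
      f x + d x * (y - x) + μ / 2 * (y - x) ^ 2 ≤ f y)
    (hd0 : ∀ x ∈ Set.Icc u v, (r : ℝ) ≤ d x)
    (hd1 : ∀ x ∈ Set.Icc u v, d x ≤ r + 2 * ε / r.den) :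
    ∃ S : Finset ℤ, (∀ m ∈ S, u ≤ (m : ℝ) ∧ (m : ℝ) ≤ v ∧ ∃ n : ℤ, |f m - n| ≤ ε) ∧
      ε * (v - u - Real.sqrt (4 / (r.den * μ))) ≤ (S.card : ℝ) := by
  by_cases huv : v - u ≤ Real.sqrt (4 / (r.den * μ))
  · refine ⟨∅, by simp, ?_⟩
    simp only [Finset.card_empty, Nat.cast_zero]
    exact mul_nonpos_of_nonneg_of_nonpos hε.le (by linarith)
  push Not at huv
  set q := r.den with hqdef
  have hqpos : 0 < q := r.den_pos
  have hq0 : (0 : ℝ) < q := by exact_mod_cast hqpos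
  have hsq0 := Real.sqrt_nonneg (4 / ((q : ℝ) * μ))
  have huv' : u < v := by linarith
  have hu : u ∈ Set.Icc u v := ⟨le_rfl, huv'.le⟩
  have hv : v ∈ Set.Icc u v := ⟨huv'.le, le_rfl⟩
  -- the convex function g
  set g : ℝ → ℝ := fun x => f x - r * x with hg
  set e : ℝ → ℝ := fun x => d x - r with he
  have hgc : ContinuousOn g (Set.Icc u v) := by
    apply hfc.sub; fun_prop
  have hgt : ∀ x ∈ Set.Icc u v, ∀ y ∈ Set.Icc u v,
      g x + e x * (y - x) + μ / 2 * (y - x) ^ 2 ≤ g y := by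
    intro x hx y hy
    have := htan x hx y hy
    simp only [hg, he]; linarith
  have he0 : ∀ x ∈ Set.Icc u v, 0 ≤ e x := fun x hx => by
    have := hd0 x hx; simp only [he]; linarith
  have he1 : ∀ x ∈ Set.Icc u v, e x ≤ 2 * ε / q := fun x hx => by
    have := hd1 x hx; simp only [he]; linarith
  -- quadratic growth
  have hgrow : ∀ x ∈ Set.Icc u v, g x ≤ g u + 2 / q →
      x - u ≤ Real.sqrt (4 / (q * μ)) := by
    intro x hx hgx
    apply Real.le_sqrt_of_sq_le
    have h1 := hgt u hu x hx
    have h2 := mul_nonneg (he0 u hu) (sub_nonneg.mpr hx.1)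
    have h3 : μ / 2 * (x - u) ^ 2 ≤ 2 / q := by linarith
    rw [le_div_iff₀ hq0] at h3
    rw [le_div_iff₀ (by positivity)]
    nlinarith
  have hgmono : ∀ x ∈ Set.Icc u v, ∀ y ∈ Set.Icc u v, g x < g y → x < y := by
    intro x hx y hy hxy
    by_contra hcon
    push Not at hcon
    have h1 := hgt y hy x hx
    have h2 := mul_nonneg (he0 y hy) (sub_nonneg.mpr hcon)
    have h3 : 0 ≤ μ / 2 * (x - y) ^ 2 := by positivity
    linarith
  have hguv : g u + 2 / q < g v := by
    by_contra hcon
    push Not at hcon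
    have := hgrow v hv hcon
    linarith
  set j0 : ℤ := ⌈(q : ℝ) * (g u + ε)⌉ with hj0
  set j1 : ℤ := ⌊(q : ℝ) * (g v - ε)⌋ with hj1
  have hj0l : (q : ℝ) * (g u + ε) ≤ j0 := Int.le_ceil _
  have hj0r : (j0 : ℝ) < q * (g u + ε) + 1 := Int.ceil_lt_add_one _
  have hj1l : (j1 : ℝ) ≤ q * (g v - ε) := Int.floor_le _
  have hj1r : (q : ℝ) * (g v - ε) < j1 + 1 := Int.lt_floor_add_one _
  have hqg : (q : ℝ) * g u + 2 < q * g v := by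
    have := mul_lt_mul_of_pos_left hguv hq0
    rw [mul_add, mul_div_cancel₀ _ hq0.ne'] at this
    linarith
  have hj01 : j0 ≤ j1 := by
    apply Int.le_floor.mpr
    nlinarith
  obtain ⟨K, hK⟩ := Int.eq_ofNat_of_zero_le (sub_nonneg.mpr hj01)
  have hKr : (K : ℝ) = j1 - j0 := by
    have : ((K : ℤ) : ℝ) = ((j1 - j0 : ℤ) : ℝ) := by rw [hK]
    push_cast at this; exact this
  -- preimages
  have hivt : ∀ t, g u ≤ t → t ≤ g v → ∃ x ∈ Set.Icc u v, g x = t := by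
    intro t h1 h2
    have := intermediate_value_Icc huv'.le hgc ⟨h1, h2⟩
    obtain ⟨x, hx, hxt⟩ := this
    exact ⟨x, hx, hxt⟩
  have hA : ∀ k : ℕ, ∃ x, k ≤ K → x ∈ Set.Icc u v ∧ g x = (j0 + k) / q - ε := by
    intro k
    by_cases hk : k ≤ K
    · have hk' : (k : ℝ) ≤ K := by exact_mod_cast hk
      have hk0 : (0 : ℝ) ≤ k := by positivity
      obtain ⟨x, hx, hxt⟩ := hivt ((j0 + k) / q - ε)
        (by rw [le_sub_iff_add_le, le_div_iff₀ hq0]; linarith)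
        (by
          have : ((j0 : ℝ) + k) / q ≤ g v - ε := by
            rw [div_le_iff₀ hq0]; linarith
          linarith)
      exact ⟨x, fun _ => ⟨hx, hxt⟩⟩
    · exact ⟨0, fun h => absurd h hk⟩
  have hB : ∀ k : ℕ, ∃ x, (k ≤ K → x ∈ Set.Icc u v ∧ g x = (j0 + k) / q + ε) ∧
      (K < k → x = v) := by
    intro k
    by_cases hk : k ≤ K
    · have hk' : (k : ℝ) ≤ K := by exact_mod_cast hk
      have hk0 : (0 : ℝ) ≤ k := by positivity
      obtain ⟨x, hx, hxt⟩ := hivt ((j0 + k) / q + ε)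
        (by
          have : g u + ε ≤ ((j0 : ℝ) + k) / q := by
            rw [le_div_iff₀ hq0]; linarith
          linarith)
        (by
          have : ((j0 : ℝ) + k) / q ≤ g v - ε := by
            rw [div_le_iff₀ hq0]; linarith
          linarith)
      exact ⟨x, fun _ => ⟨hx, hxt⟩, fun h => absurd hk (by omega)⟩
    · exact ⟨v, fun h => absurd h hk, fun _ => rfl⟩
  choose a ha using hA
  choose b hb using hB
  have hab0 : ∀ k ≤ K, a k < b k := by
    intro k hk
    obtain ⟨h1, h2⟩ := ha k hk
    obtain ⟨h3, h4⟩ := (hb k).1 hk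
    exact hgmono _ h1 _ h3 (by rw [h2, h4]; linarith)
  have hwin : ∀ k ≤ K, 2 * ε ≤ e (b k) * (b k - a k) := by
    intro k hk
    obtain ⟨h1, h2⟩ := ha k hk
    obtain ⟨h3, h4⟩ := (hb k).1 hk
    have h5 := hgt _ h3 _ h1
    have h6 : 0 ≤ μ / 2 * (a k - b k) ^ 2 := by positivity
    rw [h2, h4] at h5
    linarith
  have hlen : ∀ k ≤ K, (q : ℝ) ≤ b k - a k := by
    intro k hk
    have h1 := hwin k hk
    have h2 := he1 _ ((hb k).1 hk).1
    have h3 := mul_le_mul_of_nonneg_right h2 (sub_nonneg.mpr (hab0 k hk).le)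
    have h4 : 2 * ε ≤ 2 * ε / q * (b k - a k) := h1.trans h3
    rw [div_mul_eq_mul_div, le_div_iff₀ hq0] at h4
    exact le_of_mul_le_mul_left h4 (by linarith)
  have hnext : ∀ k ≤ K, ε * (b (k + 1) - b k) ≤ (b k - a k) / (2 * q) := by
    intro k hk
    obtain ⟨h3, h4⟩ := (hb k).1 hk
    have hn : b (k + 1) ∈ Set.Icc u v ∧ g (b (k + 1)) ≤ g (b k) + 1 / q ∧
        g (b k) ≤ g (b (k + 1)) := by
      rcases Nat.lt_or_ge k K with h | h
      · obtain ⟨h5, h6⟩ := (hb (k + 1)).1 h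
        refine ⟨h5, ?_, ?_⟩
        · rw [h6, h4]; push_cast; apply le_of_eq; ring
        · rw [h6, h4]; push_cast; gcongr; linarith
      · have hkK : k = K := le_antisymm hk h
        have h5 := (hb (k + 1)).2 (by omega)
        rw [h5]
        refine ⟨hv, ?_, ?_⟩
        · rw [h4, hkK, hKr]
          have : g v - ε ≤ ((j0 : ℝ) + (j1 - j0)) / q + 1 / q := by
            rw [← add_div, le_div_iff₀ hq0]; linarith
          linarith
        · rw [h4, hkK, hKr]
          have : ((j0 : ℝ) + (j1 - j0)) / q ≤ g v - ε := by
            rw [div_le_iff₀ hq0]; linarith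
          linarith
    obtain ⟨h5, h6, h7⟩ := hn
    have h8 := hgt _ h3 _ h5
    have h9 : 0 ≤ μ / 2 * (b (k + 1) - b k) ^ 2 := by positivity
    have h10 : e (b k) * (b (k + 1) - b k) ≤ 1 / q := by linarith
    have h11 := hwin k hk
    have h12 := hab0 k hk
    rcases le_total (b (k + 1)) (b k) with h | h
    · have : 0 ≤ (b k - a k) / (2 * q) := div_nonneg (by linarith) (by linarith)
      nlinarith
    · have h13 := mul_le_mul_of_nonneg_right h11 (sub_nonneg.mpr h)
      have h14 := mul_le_mul_of_nonneg_right h10 (sub_nonneg.mpr h12.le)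
      have h15 : 2 * ε * (b (k + 1) - b k) ≤ 1 / q * (b k - a k) := by nlinarith
      have h16 : (b k - a k) / (2 * q) = (1 / q * (b k - a k)) / 2 := by field_simp
      rw [h16]; linarith
  -- residue classes
  have hcop : IsCoprime r.num (q : ℤ) := by
    rw [Int.isCoprime_iff_gcd_eq_one]
    exact r.reduced
  have hrq : (r : ℝ) = r.num / q := by
    rw [hqdef]; exact_mod_cast (Rat.num_div_den r).symm
  have hS : ∀ k : ℕ, ∃ S : Finset ℤ, k ≤ K → (∀ m ∈ S, u ≤ (m : ℝ) ∧ (m : ℝ) ≤ v ∧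
      ∃ n : ℤ, |f m - n| ≤ ε ∧ j0 + k = q * n - r.num * m) ∧
      (b k - a k) / (2 * q) ≤ (S.card : ℝ) := by
    intro k
    by_cases hk : k ≤ K
    swap
    · exact ⟨∅, fun h => absurd h hk⟩
    obtain ⟨s, t, hst⟩ := hcop
    obtain ⟨S, hS1, hS2⟩ := hux_class_count q hqpos (-(s * (j0 + k))) (a k) (b k) (hlen k hk)
    refine ⟨S, fun _ => ⟨?_, hS2⟩⟩
    intro m hm
    obtain ⟨h1, h2, l, hl⟩ := hS1 m hm
    obtain ⟨ha1, ha2⟩ := ha k hk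
    obtain ⟨hb1, hb2⟩ := (hb k).1 hk
    have hmI : (m : ℝ) ∈ Set.Icc u v := ⟨ha1.1.trans h1, h2.trans hb1.2⟩
    have hnz : j0 + (k : ℤ) = q * (t * (j0 + k) + r.num * l) - r.num * m := by
      rw [hl]
      linear_combination (-(j0 + (k : ℤ))) * hst
    refine ⟨hmI.1, hmI.2, t * (j0 + k) + r.num * l, ?_, hnz⟩
    set n := t * (j0 + (k : ℤ)) + r.num * l with hn
    have hnr : (j0 : ℝ) + k = q * n - r.num * m := by exact_mod_cast hnz
    have h3 : ((j0 : ℝ) + k) / q = n - r * m := by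
      rw [hnr, hrq]; field_simp
    have h4 : g (a k) ≤ g m := by
      by_contra hcon
      push Not at hcon
      exact absurd (hgmono _ hmI _ ha1 hcon) (by linarith)
    have h5 : g m ≤ g (b k) := by
      by_contra hcon
      push Not at hcon
      exact absurd (hgmono _ hb1 _ hmI hcon) (by linarith)
    rw [ha2, h3] at h4
    rw [hb2, h3] at h5
    simp only [hg] at h4 h5
    rw [abs_le]
    constructor <;> linarith
  choose S hS using hS
  refine ⟨(Finset.range (K + 1)).biUnion S, ?_, ?_⟩
  · intro m hm
    simp only [Finset.mem_biUnion, Finset.mem_range] at hm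
    obtain ⟨k, hk, hmk⟩ := hm
    obtain ⟨h1, h2, n, h3, -⟩ := (hS k (by omega)).1 m hmk
    exact ⟨h1, h2, n, h3⟩
  · rw [Finset.card_biUnion]
    · push_cast
      have hsum : ∑ k ∈ Finset.range (K + 1), ε * (b (k + 1) - b k) ≤
          ∑ k ∈ Finset.range (K + 1), ((S k).card : ℝ) := by
        apply Finset.sum_le_sum
        intro k hk
        have hk' : k ≤ K := by simp at hk; omega
        exact (hnext k hk').trans (hS k hk').2
      rw [← Finset.mul_sum, Finset.sum_range_sub, (hb (K + 1)).2 (by omega)] at hsum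
      refine le_trans ?_ hsum
      apply mul_le_mul_of_nonneg_left _ hε.le
      obtain ⟨h1, h2⟩ := (hb 0).1 (by omega)
      have h3 : b 0 - u ≤ Real.sqrt (4 / (q * μ)) := by
        apply hgrow _ h1
        rw [h2]
        have h4 : ((j0 : ℝ) + (0 : ℕ)) / q ≤ g u + ε + 1 / q := by
          rw [div_le_iff₀ hq0, add_mul, one_div, inv_mul_cancel₀ hq0.ne']
          push_cast; linarith
        have h5 : 2 * ε ≤ 1 / q := by rw [le_div_iff₀ hq0]; exact hq
        have h6 : (2 : ℝ) / q = 1 / q + 1 / q := by ring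
        rw [h6]; linarith
      linarith
    · intro k hk l hl hkl
      simp only [Finset.coe_range, Set.mem_Iio] at hk hl
      rw [Function.onFun, Finset.disjoint_left]
      intro m hmk hml
      obtain ⟨-, -, n, h1, h2⟩ := (hS k (by omega)).1 m hmk
      obtain ⟨-, -, n', h1', h2'⟩ := (hS l (by omega)).1 m hml
      have hnn : n = n' := by
        rw [abs_le] at h1 h1'
        have h3 : (n : ℝ) < n' + 1 := by linarith
        have h4 : (n' : ℝ) < n + 1 := by linarith
        have h3' : n < n' + 1 := by exact_mod_cast h3
        have h4' : n' < n + 1 := by exact_mod_cast h4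
        omega
      rw [hnn] at h2
      apply hkl
      have : j0 + (k : ℤ) = j0 + l := by rw [h2, h2']
      omega

/-- Per-arc lemma, decreasing case. -/
lemma hux_arc' (f d : ℝ → ℝ) (u v μ ε : ℝ) (r : ℚ) (hμ : 0 < μ) (hε : 0 < ε)
    (hε4 : ε ≤ 1 / 4) (hq : 2 * ε * r.den ≤ 1)
    (hfc : ContinuousOn f (Set.Icc u v))
    (htan : ∀ x ∈ Set.Icc u v, ∀ y ∈ Set.Icc u v,
      f x + d x * (y - x) + μ / 2 * (y - x) ^ 2 ≤ f y)
    (hd0 : ∀ x ∈ Set.Icc u v, d x ≤ (r : ℝ))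
    (hd1 : ∀ x ∈ Set.Icc u v, r - 2 * ε / r.den ≤ d x) :
    ∃ S : Finset ℤ, (∀ m ∈ S, u ≤ (m : ℝ) ∧ (m : ℝ) ≤ v ∧ ∃ n : ℤ, |f m - n| ≤ ε) ∧
      ε * (v - u - Real.sqrt (4 / (r.den * μ))) ≤ (S.card : ℝ) := by
  have hneg : ∀ x ∈ Set.Icc (-v) (-u), -x ∈ Set.Icc u v := by
    intro x hx; exact ⟨by linarith [hx.2], by linarith [hx.1]⟩
  obtain ⟨S, h1, h2⟩ := hux_arc (fun x => f (-x)) (fun x => - d (-x)) (-v) (-u) μ ε (-r) hμ hε hε4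
    (by simpa using hq) (hfc.comp continuous_neg.continuousOn hneg)
    (by
      intro x hx y hy
      have := htan _ (hneg x hx) _ (hneg y hy)
      nlinarith)
    (by intro x hx; have := hd0 _ (hneg x hx); push_cast; linarith)
    (by
      intro x hx; have := hd1 _ (hneg x hx)
      rw [Rat.neg_den]
      push_cast; linarith)
  refine ⟨S.image (fun m => -m), ?_, ?_⟩
  · intro m hm
    simp only [Finset.mem_image] at hm
    obtain ⟨k, hk, rfl⟩ := hm
    obtain ⟨h3, h4, n, hn⟩ := h1 k hk
    refine ⟨by push_cast; linarith, by push_cast; linarith, n, ?_⟩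
    push_cast; exact hn
  · rw [Finset.card_image_of_injective _ neg_injective]
    simp only [Rat.neg_den] at h2
    have : -u - -v = v - u := by ring
    rw [this] at h2
    exact h2

/-- The case where all Farey arcs fit inside the interval. -/
lemma hux_short (A M : ℝ) (f d : ℝ → ℝ) (C Δ ε Q : ℝ) (hM : 0 < M) (hC : 1 ≤ C) (hΔ : 0 < Δ)
    (hε : 0 < ε) (hε4 : ε ≤ 1 / 4) (hQ1 : 1 ≤ Q) (hQε : 2 * ε * Q ≤ 1)
    (hQΔ : 9 * C ^ 3 * Δ * Q ≤ ε ^ 2)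
    (hfc : ContinuousOn f (Set.Icc A (A + M)))
    (hdc : ContinuousOn d (Set.Icc A (A + M)))
    (htan : ∀ x ∈ Set.Icc A (A + M), ∀ y ∈ Set.Icc A (A + M),
      f x + d x * (y - x) + (Δ / C) / 2 * (y - x) ^ 2 ≤ f y)
    (hdl : ∀ x ∈ Set.Icc A (A + M), ∀ y ∈ Set.Icc A (A + M), x ≤ y →
      d x + Δ / C * (y - x) ≤ d y)
    (hdu : ∀ x ∈ Set.Icc A (A + M), ∀ y ∈ Set.Icc A (A + M), x ≤ y →
      d y ≤ d x + C * Δ * (y - x))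
    (hshort : ∀ x ∈ Set.Icc (A + 3 * M / 8) (A + 5 * M / 8), ∀ r : ℚ, (r.den : ℝ) ≤ Q →
      |d x - r| ≤ 1 / (r.den * Q) → C / (r.den * Q * Δ) ≤ M / 4) :
    ∃ S : Finset ℤ, (∀ m ∈ S, (m : ℝ) ∈ Set.Icc A (A + M) ∧ ∃ n : ℤ, |f m - n| ≤ ε) ∧
      ε ^ 2 * Q * M / (24 * C ^ 2) ≤ (S.card : ℝ) := by
  have hC0 : 0 < C := by linarith
  have hQ0 : 0 < Q := by linarith
  set Mid := Set.Icc (A + 3 * M / 8) (A + 5 * M / 8) with hMid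
  have hMI : ∀ x ∈ Mid, x ∈ Set.Icc A (A + M) := by
    intro x hx; exact ⟨by linarith [hx.1], by linarith [hx.2]⟩
  set T : Set ℚ := {r | (r.den : ℝ) ≤ Q ∧ ∃ x ∈ Mid, |d x - r| ≤ 1 / (r.den * Q)} with hT
  -- Dirichlet
  have hDir : ∀ x ∈ Mid, ∃ r ∈ T, |d x - r| ≤ 1 / (r.den * Q) := by
    intro x hx
    have hn : 0 < ⌊Q⌋₊ := Nat.floor_pos.mpr hQ1
    obtain ⟨r, h1, h2⟩ := Real.exists_rat_abs_sub_le_and_den_le (d x) hn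
    have hr0 : (0 : ℝ) < r.den := by exact_mod_cast r.den_pos
    have h3 : (r.den : ℝ) ≤ Q := by
      have : (r.den : ℝ) ≤ ⌊Q⌋₊ := by exact_mod_cast h2
      exact this.trans (Nat.floor_le hQ0.le)
    have h4 : |d x - r| ≤ 1 / (r.den * Q) := by
      refine h1.trans ?_
      apply one_div_le_one_div_of_le (by positivity)
      have := (Nat.lt_floor_add_one Q).le
      rw [mul_comm]
      gcongr
    exact ⟨r, ⟨h3, x, hx, h4⟩, h4⟩
  -- finiteness
  have hfin : T.Finite := by
    have hAI : A ∈ Set.Icc A (A + M) := ⟨le_rfl, by linarith⟩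
    obtain ⟨B, hB⟩ : ∃ B : ℝ, ∀ x ∈ Mid, |d x| ≤ B := by
      obtain ⟨B, hB⟩ := isCompact_Icc.exists_bound_of_continuousOn hdc
      exact ⟨B, fun x hx => hB x (hMI x hx)⟩
    set N : ℤ := ⌈(B + 1) * Q⌉ with hN
    apply Set.Finite.subset (((Set.finite_Icc (-N) N).prod (Set.finite_Icc (0 : ℤ) ⌈Q⌉)).image
      (fun p : ℤ × ℤ => (p.1 : ℚ) / (p.2 : ℚ)))
    rintro r ⟨h1, x, hx, h2⟩
    refine ⟨(r.num, (r.den : ℤ)), ⟨?_, ?_⟩, ?_⟩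
    · have hr0 : (0 : ℝ) < r.den := by exact_mod_cast r.den_pos
      have hr1 : (1 : ℝ) ≤ r.den := by exact_mod_cast r.den_pos
      have h3 : |(r : ℝ)| ≤ B + 1 := by
        have h4 : (1 : ℝ) / (r.den * Q) ≤ 1 := by
          rw [div_le_one (by positivity)]; nlinarith
        have h5 := hB x hx
        have h6 : |(r : ℝ)| ≤ |d x| + |d x - r| := by
          have := abs_sub (d x) (d x - r)
          simpa using this
        linarith
      have h4 : |(r.num : ℝ)| ≤ (B + 1) * Q := by
        have h5 : (r : ℝ) * r.den = r.num := by
          exact_mod_cast Rat.mul_den_eq_num r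
        rw [← h5, abs_mul, abs_of_pos hr0]
        exact mul_le_mul h3 h1 hr0.le ((abs_nonneg _).trans h3)
      have h5 : |(r.num : ℝ)| ≤ N := h4.trans (Int.le_ceil _)
      rw [abs_le] at h5
      exact ⟨by exact_mod_cast h5.1, by exact_mod_cast h5.2⟩
    · refine ⟨by simp, ?_⟩
      have : (r.den : ℝ) ≤ ⌈Q⌉ := h1.trans (Int.le_ceil _)
      show (r.den : ℤ) ≤ ⌈Q⌉
      exact_mod_cast this
    · simp only [Int.cast_natCast]
      exact Rat.num_div_den r
  -- single arcs
  have harc : ∀ r : ℚ, ∃ (c : ℝ) (S : Finset ℤ), r ∈ T →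
      (∀ x ∈ Mid, |d x - r| ≤ 1 / (r.den * Q) →
        x ∈ Set.Icc (c - C / (r.den * Q * Δ)) (c + C / (r.den * Q * Δ))) ∧
      (∀ m ∈ S, (m : ℝ) ∈ Set.Icc A (A + M) ∧ (∃ n : ℤ, |f m - n| ≤ ε) ∧
        (r : ℝ) ≤ d m ∧ d m ≤ r + ε / r.den) ∧
      ε ^ 2 * Q / (3 * C ^ 2) * (C / (r.den * Q * Δ)) ≤ (S.card : ℝ) := by
    intro r
    by_cases hr : r ∈ T
    swap
    · exact ⟨0, ∅, fun h => absurd h hr⟩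
    obtain ⟨hrQ, x0, hx0, hx0r⟩ := hr
    have hr0 : (0 : ℝ) < r.den := by exact_mod_cast r.den_pos
    set q : ℝ := (r.den : ℝ) with hq
    set L := C / (q * Q * Δ) with hL
    have hL0 : 0 < L := by positivity
    have hL4 : L ≤ M / 4 := hshort x0 hx0 r hrQ hx0r
    have hΔL : Δ / C * L = 1 / (q * Q) := by rw [hL]; field_simp
    have hx0I := hMI x0 hx0
    have hxl : x0 - L ∈ Set.Icc A (A + M) := ⟨by linarith [hx0.1], by linarith [hx0.2]⟩
    have hxr : x0 + L ∈ Set.Icc A (A + M) := ⟨by linarith [hx0.1], by linarith [hx0.2]⟩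
    rw [abs_le] at hx0r
    obtain ⟨c, hc, hcr⟩ : ∃ c ∈ Set.Icc (x0 - L) (x0 + L), d c = r := by
      have h1 := hdl _ hxl _ hx0I (by linarith)
      have h2 := hdl _ hx0I _ hxr (by linarith)
      have h3 : x0 - (x0 - L) = L := by ring
      have h4 : x0 + L - x0 = L := by ring
      rw [h3, hΔL] at h1
      rw [h4, hΔL] at h2
      have := intermediate_value_Icc (by linarith : x0 - L ≤ x0 + L)
        (hdc.mono (Set.Icc_subset_Icc hxl.1 hxr.2))
        (⟨by linarith, by linarith⟩ : (r : ℝ) ∈ Set.Icc (d (x0 - L)) (d (x0 + L)))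
      obtain ⟨c, hc, hcr⟩ := this
      exact ⟨c, hc, hcr⟩
    have hc1 : A + M / 8 ≤ c := by linarith [hx0.1, hc.1]
    have hc2 : c ≤ A + 7 * M / 8 := by linarith [hx0.2, hc.2]
    have hcI : c ∈ Set.Icc A (A + M) := ⟨by linarith, by linarith⟩
    set l := ε / (C * q * Δ) with hl
    have hl0 : 0 < l := by positivity
    have hlL : l = ε * Q / C ^ 2 * L := by rw [hl, hL]; field_simp
    have hl8 : l ≤ M / 8 := by
      have h1 : ε * Q / C ^ 2 ≤ 1 / 2 := by
        rw [div_le_iff₀ (by positivity)]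
        nlinarith
      rw [hlL]
      have := mul_le_mul_of_nonneg_right h1 hL0.le
      linarith
    have hlI : c + l ∈ Set.Icc A (A + M) := ⟨by linarith, by linarith⟩
    have hsub : Set.Icc c (c + l) ⊆ Set.Icc A (A + M) := Set.Icc_subset_Icc hcI.1 hlI.2
    have hCl : C * Δ * l = ε / q := by rw [hl]; field_simp
    have hd0 : ∀ x ∈ Set.Icc c (c + l), (r : ℝ) ≤ d x := by
      intro x hx
      have h1 := hdl _ hcI _ (hsub hx) hx.1
      have h2 : 0 ≤ Δ / C * (x - c) := mul_nonneg (by positivity) (by linarith [hx.1])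
      linarith
    have hd1 : ∀ x ∈ Set.Icc c (c + l), d x ≤ r + ε / q := by
      intro x hx
      have h1 := hdu _ hcI _ (hsub hx) hx.1
      have h2 : C * Δ * (x - c) ≤ C * Δ * l :=
        mul_le_mul_of_nonneg_left (by linarith [hx.2]) (by positivity)
      linarith
    obtain ⟨S, hS1, hS2⟩ := hux_arc f d c (c + l) (Δ / C) ε r (by positivity) hε hε4
      (by
        refine le_trans ?_ hQε
        gcongr)
      (hfc.mono hsub) (fun x hx y hy => htan x (hsub hx) y (hsub hy)) hd0
      (by
        intro x hx
        refine (hd1 x hx).trans ?_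
        gcongr
        linarith)
    refine ⟨c, S, fun _ => ⟨?_, ?_, ?_⟩⟩
    · intro x hx hxr'
      have hxI := hMI x hx
      rw [abs_le, ← hΔL] at hxr'
      have hpos : 0 < Δ / C := by positivity
      constructor
      · by_contra hcon
        push Not at hcon
        have h1 := hdl x hxI c hcI (by linarith)
        have h2 : Δ / C * L < Δ / C * (c - x) :=
          mul_lt_mul_of_pos_left (by linarith) hpos
        linarith [hxr'.1]
      · by_contra hcon
        push Not at hcon
        have h1 := hdl c hcI x hxI (by linarith)
        have h2 : Δ / C * L < Δ / C * (x - c) :=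
          mul_lt_mul_of_pos_left (by linarith) hpos
        linarith [hxr'.2]
    · intro m hm
      obtain ⟨h1, h2, h3⟩ := hS1 m hm
      exact ⟨hsub ⟨h1, h2⟩, h3, hd0 m ⟨h1, h2⟩, hd1 m ⟨h1, h2⟩⟩
    · refine le_trans ?_ hS2
      have h1 : Real.sqrt (4 / (q * (Δ / C))) ≤ 2 / 3 * l := by
        apply Real.sqrt_le_iff.mpr
        refine ⟨by positivity, ?_⟩
        have h2 : (2 / 3 * l) ^ 2 = 4 * ε ^ 2 / (9 * C ^ 2 * q ^ 2 * Δ ^ 2) := by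
          rw [hl]; field_simp; norm_num
        have h3 : 4 / (q * (Δ / C)) = 4 * (9 * C ^ 3 * Δ * q) / (9 * C ^ 2 * q ^ 2 * Δ ^ 2) := by
          field_simp
        rw [h2, h3]
        have h4 : 9 * C ^ 3 * Δ * q ≤ ε ^ 2 := by
          refine le_trans ?_ hQΔ
          gcongr
        gcongr
      have h5 : ε ^ 2 * Q / (3 * C ^ 2) * L = ε * (l / 3) := by rw [hlL]; field_simp
      rw [h5]
      apply mul_le_mul_of_nonneg_left _ hε.le
      linarith
  choose c S hcS using harc
  refine ⟨hfin.toFinset.biUnion S, ?_, ?_⟩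
  · intro m hm
    simp only [Finset.mem_biUnion, Set.Finite.mem_toFinset] at hm
    obtain ⟨r, hr, hmr⟩ := hm
    obtain ⟨h1, h2, -⟩ := (hcS r hr).2.1 m hmr
    exact ⟨h1, h2⟩
  · rw [Finset.card_biUnion]
    · push_cast
      have hsum : ∑ r ∈ hfin.toFinset, ε ^ 2 * Q / (3 * C ^ 2) * (C / (r.den * Q * Δ)) ≤
          ∑ r ∈ hfin.toFinset, ((S r).card : ℝ) := by
        apply Finset.sum_le_sum
        intro r hr
        exact (hcS r (by simpa using hr)).2.2
      refine le_trans ?_ hsum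
      rw [← Finset.mul_sum]
      have hmeas : M / 4 ≤ ∑ r ∈ hfin.toFinset, 2 * (C / ((r.den : ℝ) * Q * Δ)) := by
        have h1 : Mid ⊆ ⋃ r ∈ hfin.toFinset,
            Set.Icc (c r - C / (r.den * Q * Δ)) (c r + C / (r.den * Q * Δ)) := by
          intro x hx
          obtain ⟨r, hr, hxr⟩ := hDir x hx
          simp only [Set.mem_iUnion]
          exact ⟨r, by simpa using hr, (hcS r hr).1 x hx hxr⟩
        have h2 := (MeasureTheory.measure_mono (μ := MeasureTheory.volume) h1).trans
          (MeasureTheory.measure_biUnion_finset_le _ _)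
        simp only [hMid, Real.volume_Icc] at h2
        rw [← ENNReal.ofReal_sum_of_nonneg] at h2
        · rw [ENNReal.ofReal_le_ofReal_iff] at h2
          · refine le_trans (le_of_eq (by ring)) (h2.trans (le_of_eq ?_))
            apply Finset.sum_congr rfl
            intro r _; ring
          · apply Finset.sum_nonneg
            intro r _
            have : 0 ≤ C / ((r.den : ℝ) * Q * Δ) := by positivity
            linarith
        · intro r _
          have : 0 ≤ C / ((r.den : ℝ) * Q * Δ) := by positivity
          linarith
      rw [← Finset.mul_sum] at hmeas
      have h3 : ε ^ 2 * Q * M / (24 * C ^ 2) = ε ^ 2 * Q / (3 * C ^ 2) * (M / 8) := by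
        field_simp; norm_num
      rw [h3]
      apply mul_le_mul_of_nonneg_left _ (by positivity)
      linarith
    · have key : ∀ r ∈ T, ∀ s ∈ T, r < s → Disjoint (S r) (S s) := by
        intro r hr s hs hrs
        rw [Finset.disjoint_left]
        intro m hmr hms
        obtain ⟨-, -, -, h1⟩ := (hcS r hr).2.1 m hmr
        obtain ⟨-, -, h2, -⟩ := (hcS s hs).2.1 m hms
        have hr0 : (0 : ℝ) < r.den := by exact_mod_cast r.den_pos
        have hs0 : (0 : ℝ) < s.den := by exact_mod_cast s.den_pos
        have h5 : (r : ℝ) * r.den = r.num := by exact_mod_cast Rat.mul_den_eq_num r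
        have h6 : (s : ℝ) * s.den = s.num := by exact_mod_cast Rat.mul_den_eq_num s
        have h7 : (s : ℝ) - r ≤ ε / r.den := by linarith
        rw [le_div_iff₀ hr0] at h7
        have hrs' : (r : ℝ) < s := by exact_mod_cast hrs
        have h8 : (0 : ℝ) < ((s.num * r.den - r.num * s.den : ℤ) : ℝ) := by
          push_cast
          rw [← h5, ← h6]
          have := mul_pos (mul_pos (sub_pos.mpr hrs') hr0) hs0
          linarith
        have h9 : (1 : ℝ) ≤ ((s.num * r.den - r.num * s.den : ℤ) : ℝ) := by
          exact_mod_cast h8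
        push_cast at h9
        rw [← h5, ← h6] at h9
        have h10 := mul_le_mul_of_nonneg_right h7 hs0.le
        have h11 : ε * s.den ≤ ε * Q := mul_le_mul_of_nonneg_left hs.1 hε.le
        linarith
      intro r hr s hs hrs
      have hr' : r ∈ T := by simpa using hr
      have hs' : s ∈ T := by simpa using hs
      rcases lt_or_gt_of_ne hrs with h | h
      · exact key r hr' s hs' h
      · exact (key s hs' r hr' h).symm

/-- The case of one long Farey arc. -/
lemma hux_long (A M : ℝ) (f d : ℝ → ℝ) (C Δ ε : ℝ) (hM : 0 < M) (hC : 1 ≤ C) (hΔ : 0 < Δ)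
    (hε : 0 < ε) (hε4 : ε ≤ 1 / 4) (h144 : 144 * C ≤ Δ * M ^ 2)
    (hfc : ContinuousOn f (Set.Icc A (A + M)))
    (htan : ∀ x ∈ Set.Icc A (A + M), ∀ y ∈ Set.Icc A (A + M),
      f x + d x * (y - x) + (Δ / C) / 2 * (y - x) ^ 2 ≤ f y)
    (hdl : ∀ x ∈ Set.Icc A (A + M), ∀ y ∈ Set.Icc A (A + M), x ≤ y →
      d x + Δ / C * (y - x) ≤ d y)
    (hdu : ∀ x ∈ Set.Icc A (A + M), ∀ y ∈ Set.Icc A (A + M), x ≤ y →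
      d y ≤ d x + C * Δ * (y - x))
    (x : ℝ) (hx : x ∈ Set.Icc (A + 3 * M / 8) (A + 5 * M / 8)) (r : ℚ)
    (hq : 2 * ε * r.den ≤ 1) (hQΔ : 9 * C ^ 3 * Δ * r.den ≤ ε ^ 2)
    (hxr : |d x - r| ≤ 2 * ε / r.den) (hlong : M / 4 ≤ 2 * C * ε / (r.den * Δ)) :
    ∃ S : Finset ℤ, (∀ m ∈ S, (m : ℝ) ∈ Set.Icc A (A + M) ∧ ∃ n : ℤ, |f m - n| ≤ ε) ∧
      ε * M / (72 * C ^ 2) ≤ (S.card : ℝ) := by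
  have hC0 : 0 < C := by linarith
  have hr0 : (0 : ℝ) < r.den := by exact_mod_cast r.den_pos
  have hr1 : (1 : ℝ) ≤ r.den := by exact_mod_cast r.den_pos
  set q : ℝ := (r.den : ℝ) with hqd
  set p := min (3 * M / 16) (ε / (C * q * Δ)) with hp
  have hp0 : 0 < p := lt_min (by linarith) (by positivity)
  have hp1 : p ≤ 3 * M / 16 := min_le_left _ _
  have hp2 : p ≤ ε / (C * q * Δ) := min_le_right _ _
  have hCp : C * Δ * (2 * p) ≤ 2 * ε / q := by
    have h1 : C * Δ * (2 * (ε / (C * q * Δ))) = 2 * ε / q := by field_simp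
    rw [← h1]; gcongr
  have hpM : M / (8 * C ^ 2) ≤ p := by
    apply le_min
    · rw [div_le_iff₀ (by positivity)]
      have : 1 ≤ C ^ 2 := one_le_pow₀ hC
      nlinarith
    · have h1 : ε / (C * q * Δ) = 2 * C * ε / (q * Δ) / (2 * C ^ 2) := by field_simp
      have h2 : M / (8 * C ^ 2) = M / 4 / (2 * C ^ 2) := by field_simp; norm_num
      rw [h1, h2]
      gcongr
  have hsq : Real.sqrt (4 / (q * (Δ / C))) ≤ 8 / 9 * p := by
    rw [hp, mul_min_of_nonneg _ _ (by norm_num)]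
    apply le_min
    · apply Real.sqrt_le_iff.mpr
      refine ⟨by linarith, ?_⟩
      rw [div_le_iff₀ (by positivity)]
      have h1 : (8 / 9 * (3 * M / 16)) ^ 2 * (q * (Δ / C)) = M ^ 2 * Δ * q / (36 * C) := by
        field_simp; norm_num
      rw [h1, le_div_iff₀ (by positivity)]
      have h2 : 0 ≤ M ^ 2 * Δ := by positivity
      nlinarith
    · have h0 : Real.sqrt (4 / (q * (Δ / C))) ≤ 2 / 3 * (ε / (C * q * Δ)) := by
        apply Real.sqrt_le_iff.mpr
        refine ⟨by positivity, ?_⟩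
        have h2 : (2 / 3 * (ε / (C * q * Δ))) ^ 2
            = 4 * ε ^ 2 / (9 * C ^ 2 * q ^ 2 * Δ ^ 2) := by
          field_simp; norm_num
        have h3 : 4 / (q * (Δ / C)) = 4 * (9 * C ^ 3 * Δ * q) / (9 * C ^ 2 * q ^ 2 * Δ ^ 2) := by
          field_simp
        rw [h2, h3]
        gcongr
      have : 0 < ε / (C * q * Δ) := by positivity
      linarith
  -- it suffices to find a monotone piece of length p
  have hfinal : ∀ w, A ≤ w → w + p ≤ A + M →
      ((∀ y ∈ Set.Icc w (w + p), (r : ℝ) ≤ d y ∧ d y ≤ r + 2 * ε / q) ∨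
       (∀ y ∈ Set.Icc w (w + p), d y ≤ (r : ℝ) ∧ r - 2 * ε / q ≤ d y)) →
      ∃ S : Finset ℤ, (∀ m ∈ S, (m : ℝ) ∈ Set.Icc A (A + M) ∧ ∃ n : ℤ, |f m - n| ≤ ε) ∧
      ε * M / (72 * C ^ 2) ≤ (S.card : ℝ) := by
    intro w hw1 hw2 hor
    have hsub : Set.Icc w (w + p) ⊆ Set.Icc A (A + M) := Set.Icc_subset_Icc hw1 hw2
    obtain ⟨S, hS1, hS2⟩ : ∃ S : Finset ℤ, (∀ m ∈ S, w ≤ (m : ℝ) ∧ (m : ℝ) ≤ w + p ∧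
        ∃ n : ℤ, |f m - n| ≤ ε) ∧
        ε * (w + p - w - Real.sqrt (4 / (r.den * (Δ / C)))) ≤ (S.card : ℝ) := by
      rcases hor with h | h
      · exact hux_arc f d w (w + p) (Δ / C) ε r (by positivity) hε hε4 hq
          (hfc.mono hsub) (fun x hx y hy => htan x (hsub hx) y (hsub hy))
          (fun y hy => (h y hy).1) (fun y hy => (h y hy).2)
      · exact hux_arc' f d w (w + p) (Δ / C) ε r (by positivity) hε hε4 hq
          (hfc.mono hsub) (fun x hx y hy => htan x (hsub hx) y (hsub hy))
          (fun y hy => (h y hy).1) (fun y hy => (h y hy).2)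
    refine ⟨S, fun m hm => ?_, ?_⟩
    · obtain ⟨h1, h2, h3⟩ := hS1 m hm
      exact ⟨hsub ⟨h1, h2⟩, h3⟩
    · refine le_trans ?_ hS2
      have h1 : ε * M / (72 * C ^ 2) = ε * (M / (8 * C ^ 2) / 9) := by field_simp; norm_num
      rw [h1]
      apply mul_le_mul_of_nonneg_left _ hε.le
      linarith
  have hmono : ∀ y ∈ Set.Icc A (A + M), ∀ z ∈ Set.Icc A (A + M), y ≤ z → d y ≤ d z := by
    intro y hy z hz hyz
    have h1 := hdl y hy z hz hyz
    have h2 : 0 ≤ Δ / C * (z - y) := mul_nonneg (by positivity) (by linarith)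
    linarith
  have hlip : ∀ y ∈ Set.Icc A (A + M), ∀ z ∈ Set.Icc A (A + M), y ≤ z → z - y ≤ 2 * p →
      d z ≤ d y + 2 * ε / q := by
    intro y hy z hz hyz hzy
    have h1 := hdu y hy z hz hyz
    have h2 : C * Δ * (z - y) ≤ C * Δ * (2 * p) :=
      mul_le_mul_of_nonneg_left hzy (by positivity)
    linarith
  obtain ⟨hx1, hx2⟩ := hx
  have hI : ∀ y, x - 2 * p ≤ y → y ≤ x + 2 * p → y ∈ Set.Icc A (A + M) :=
    fun y h1 h2 => ⟨by linarith, by linarith⟩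
  have hxI := hI x (by linarith) (by linarith)
  rw [abs_le] at hxr
  rcases le_total (r : ℝ) (d x) with hs | hs
  · rcases le_total (r : ℝ) (d (x - p)) with hs' | hs'
    · apply hfinal (x - p) (by linarith) (by linarith)
      left
      intro y hy
      have hy2 : y ≤ x := by linarith [hy.2]
      have hyI := hI y (by linarith [hy.1]) (by linarith)
      have h1 := hmono _ (hI (x - p) (by linarith) (by linarith)) y hyI hy.1
      have h2 := hmono y hyI x hxI hy2
      constructor <;> linarith
    · apply hfinal (x - 2 * p) (by linarith) (by linarith)
      right
      intro y hy
      have hy2 : y ≤ x - p := by linarith [hy.2]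
      have hyI := hI y (by linarith [hy.1]) (by linarith)
      have h1 := hmono y hyI _ (hI (x - p) (by linarith) (by linarith)) hy2
      have h2 := hlip y hyI x hxI (by linarith) (by linarith [hy.1])
      constructor <;> linarith
  · rcases le_total (d (x + p)) (r : ℝ) with hs' | hs'
    · apply hfinal x (by linarith) (by linarith)
      right
      intro y hy
      have hyI := hI y (by linarith [hy.1]) (by linarith [hy.2])
      have h1 := hmono y hyI _ (hI (x + p) (by linarith) (by linarith)) hy.2
      have h2 := hmono x hxI y hyI hy.1
      constructor <;> linarith
    · apply hfinal (x + p) (by linarith) (by linarith)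
      left
      intro y hy
      have hyI := hI y (by linarith [hy.1]) (by linarith [hy.2])
      have h1 := hmono _ (hI (x + p) (by linarith) (by linarith)) y hyI hy.1
      have h2 := hlip x hxI y hyI (by linarith [hy.1]) (by linarith [hy.2])
      constructor <;> linarith

/-- The convex case. -/
lemma hux_convex (A M : ℝ) (f d : ℝ → ℝ) (C Δ ε : ℝ) (hM : 0 < M) (hC : 1 ≤ C) (hΔ : 0 < Δ)
    (hε : 0 < ε) (hε4 : ε ≤ 1 / 4) (h144 : 144 * C ≤ Δ * M ^ 2)
    (h9 : 9 * C ^ 3 * Δ ≤ ε ^ 2) (h72 : 72 * C ^ 4 ≤ ε ^ 2 * M)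
    (hfc : ContinuousOn f (Set.Icc A (A + M)))
    (hdc : ContinuousOn d (Set.Icc A (A + M)))
    (htan : ∀ x ∈ Set.Icc A (A + M), ∀ y ∈ Set.Icc A (A + M),
      f x + d x * (y - x) + (Δ / C) / 2 * (y - x) ^ 2 ≤ f y)
    (hdl : ∀ x ∈ Set.Icc A (A + M), ∀ y ∈ Set.Icc A (A + M), x ≤ y →
      d x + Δ / C * (y - x) ≤ d y)
    (hdu : ∀ x ∈ Set.Icc A (A + M), ∀ y ∈ Set.Icc A (A + M), x ≤ y →
      d y ≤ d x + C * Δ * (y - x)) :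
    ∃ S : Finset ℤ, (∀ m ∈ S, (m : ℝ) ∈ Set.Icc A (A + M) ∧ ∃ n : ℤ, |f m - n| ≤ ε) ∧
      min (ε ^ 4 * M / (2 ^ 4 * 3 ^ 4 * C ^ 7 * Δ)) (ε * M / (2 ^ 7 * 3 ^ 2 * C ^ 4))
        ≤ (S.card : ℝ) := by
  have hC0 : 0 < C := by linarith
  set Q := min (1 / (2 * ε)) (ε ^ 2 / (9 * C ^ 3 * Δ)) with hQ
  have hQ1 : 1 ≤ Q := by
    apply le_min
    · rw [le_div_iff₀ (by positivity)]; linarith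
    · rw [le_div_iff₀ (by positivity)]; linarith
  have hQ0 : 0 < Q := by linarith
  have hQa : Q ≤ 1 / (2 * ε) := min_le_left _ _
  have hQb : Q ≤ ε ^ 2 / (9 * C ^ 3 * Δ) := min_le_right _ _
  have hQε : 2 * ε * Q ≤ 1 := by
    rw [le_div_iff₀ (by positivity)] at hQa; linarith
  have hQΔ : 9 * C ^ 3 * Δ * Q ≤ ε ^ 2 := by
    rw [le_div_iff₀ (by positivity)] at hQb; linarith
  have hC24 : C ^ 2 ≤ C ^ 4 := pow_le_pow_right₀ hC (by norm_num)
  have hC57 : C ^ 5 ≤ C ^ 7 := pow_le_pow_right₀ hC (by norm_num)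
  by_cases hshort : ∀ x ∈ Set.Icc (A + 3 * M / 8) (A + 5 * M / 8), ∀ r : ℚ, (r.den : ℝ) ≤ Q →
      |d x - r| ≤ 1 / (r.den * Q) → C / (r.den * Q * Δ) ≤ M / 4
  · obtain ⟨S, hS1, hS2⟩ := hux_short A M f d C Δ ε Q hM hC hΔ hε hε4 hQ1 hQε hQΔ hfc hdc
      htan hdl hdu hshort
    refine ⟨S, hS1, le_trans ?_ hS2⟩
    rcases min_choice (1 / (2 * ε)) (ε ^ 2 / (9 * C ^ 3 * Δ)) with h | h
    · refine (min_le_right _ _).trans ?_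
      rw [hQ, h]
      have h1 : ε ^ 2 * (1 / (2 * ε)) * M / (24 * C ^ 2) = ε * M / (48 * C ^ 2) := by
        field_simp; norm_num
      rw [h1]
      apply div_le_div_of_nonneg_left (by positivity) (by positivity)
      have : 0 < C ^ 2 := by positivity
      linarith
    · refine (min_le_left _ _).trans ?_
      rw [hQ, h]
      have h1 : ε ^ 2 * (ε ^ 2 / (9 * C ^ 3 * Δ)) * M / (24 * C ^ 2)
          = ε ^ 4 * M / (216 * C ^ 5 * Δ) := by
        field_simp; norm_num
      rw [h1]
      apply div_le_div_of_nonneg_left (by positivity) (by positivity)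
      apply mul_le_mul_of_nonneg_right _ hΔ.le
      have : 0 < C ^ 5 := by positivity
      linarith
  · push Not at hshort
    obtain ⟨x, hx, r, hrQ, hxr, hlong⟩ := hshort
    have hr0 : (0 : ℝ) < r.den := by exact_mod_cast r.den_pos
    have hr1 : (1 : ℝ) ≤ r.den := by exact_mod_cast r.den_pos
    rcases min_choice (1 / (2 * ε)) (ε ^ 2 / (9 * C ^ 3 * Δ)) with h | h
    · obtain ⟨S, hS1, hS2⟩ := hux_long A M f d C Δ ε hM hC hΔ hε hε4 h144 hfc htan hdl hdu x hx r
        (by refine le_trans ?_ hQε; gcongr) (by refine le_trans ?_ hQΔ; gcongr)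
        (by
          refine hxr.trans (le_of_eq ?_)
          rw [hQ, h]; field_simp)
        (by
          refine hlong.le.trans (le_of_eq ?_)
          rw [hQ, h]; field_simp)
      refine ⟨S, hS1, (min_le_right _ _).trans (le_trans ?_ hS2)⟩
      apply div_le_div_of_nonneg_left (by positivity) (by positivity)
      have : 0 < C ^ 2 := by positivity
      linarith
    · exfalso
      rw [hQ, h] at hlong
      have h1 : C / (r.den * (ε ^ 2 / (9 * C ^ 3 * Δ)) * Δ) = 9 * C ^ 4 / (r.den * ε ^ 2) := by
        field_simp
      rw [h1, lt_div_iff₀ (by positivity)] at hlong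
      have h2 : 0 < ε ^ 2 * M := by positivity
      nlinarith

lemma hux_deriv (A M : ℝ) (f d e : ℝ → ℝ) (μ ν : ℝ)
    (hd : ∀ x ∈ Set.Icc A (A + M), HasDerivWithinAt f (d x) (Set.Icc A (A + M)) x)
    (he : ∀ x ∈ Set.Icc A (A + M), HasDerivWithinAt d (e x) (Set.Icc A (A + M)) x)
    (hl : ∀ x ∈ Set.Icc A (A + M), μ ≤ e x) (hu : ∀ x ∈ Set.Icc A (A + M), e x ≤ ν) :
    (∀ x ∈ Set.Icc A (A + M), ∀ y ∈ Set.Icc A (A + M),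
      f x + d x * (y - x) + μ / 2 * (y - x) ^ 2 ≤ f y) ∧
    (∀ x ∈ Set.Icc A (A + M), ∀ y ∈ Set.Icc A (A + M), x ≤ y →
      d x + μ * (y - x) ≤ d y) ∧
    (∀ x ∈ Set.Icc A (A + M), ∀ y ∈ Set.Icc A (A + M), x ≤ y →
      d y ≤ d x + ν * (y - x)) := by
  have hmono : ∀ (φ φ' : ℝ → ℝ) (a b : ℝ), a ∈ Set.Icc A (A + M) → b ∈ Set.Icc A (A + M) →
      a ≤ b →
      (∀ x ∈ Set.Icc A (A + M), HasDerivWithinAt φ (φ' x) (Set.Icc A (A + M)) x) →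
      (∀ x ∈ Set.Icc a b, 0 ≤ φ' x) → φ a ≤ φ b := by
    intro φ φ' a b ha hb hab hφ h0
    have hsub : Set.Icc a b ⊆ Set.Icc A (A + M) := Set.Icc_subset_Icc ha.1 hb.2
    have := monotoneOn_of_hasDerivWithinAt_nonneg (convex_Icc a b)
      (f := φ) (f' := φ')
      (fun x hx => ((hφ x (hsub hx)).mono hsub).continuousWithinAt)
      (fun x hx => (hφ x (hsub (interior_subset hx))).mono
        (interior_subset.trans hsub))
      (fun x hx => h0 x (interior_subset hx))
    exact this ⟨le_rfl, hab⟩ ⟨hab, le_rfl⟩ hab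
  have h1 : ∀ x ∈ Set.Icc A (A + M), ∀ y ∈ Set.Icc A (A + M), x ≤ y →
      d x + μ * (y - x) ≤ d y := by
    intro x hx y hy hxy
    have := hmono (fun s => d s - μ * s) (fun s => e s - μ * 1) x y hx hy hxy
      (fun s hs => (he s hs).sub ((hasDerivWithinAt_id s _).const_mul μ))
      (fun s hs => by
        have := hl s ⟨hx.1.trans hs.1, hs.2.trans hy.2⟩
        linarith)
    linarith
  have h2 : ∀ x ∈ Set.Icc A (A + M), ∀ y ∈ Set.Icc A (A + M), x ≤ y →
      d y ≤ d x + ν * (y - x) := by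
    intro x hx y hy hxy
    have := hmono (fun s => ν * s - d s) (fun s => ν * 1 - e s) x y hx hy hxy
      (fun s hs => ((hasDerivWithinAt_id s _).const_mul ν).sub (he s hs))
      (fun s hs => by
        have := hu s ⟨hx.1.trans hs.1, hs.2.trans hy.2⟩
        linarith)
    linarith
  refine ⟨?_, h1, h2⟩
  intro x hx y hy
  have hquad : ∀ s, HasDerivWithinAt (fun s => d x * (s - x) + μ / 2 * (s - x) ^ 2)
      (d x + μ * (s - x)) (Set.Icc A (A + M)) s := by
    intro s
    have h3 : HasDerivAt (fun s => s - x) 1 s := (hasDerivAt_id s).sub_const x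
    have h4 := (h3.const_mul (d x)).add ((h3.pow 2).const_mul (μ / 2))
    refine (h4.congr_deriv ?_).hasDerivWithinAt
    simp; ring
  rcases le_total x y with hxy | hxy
  · have := hmono _ _ x y hx hy hxy (fun s hs => (hd s hs).sub (hquad s))
      (fun s hs => by
        have := h1 x hx s ⟨hx.1.trans hs.1, hs.2.trans hy.2⟩ hs.1
        linarith)
    simp at this
    linarith
  · have := hmono _ _ y x hy hx hxy (fun s hs => (hquad s).sub (hd s hs))
      (fun s hs => by
        have := h1 s ⟨hy.1.trans hs.1, hs.2.trans hx.2⟩ x hx hs.2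
        linarith)
    simp at this
    linarith

/-- **Huxley's theorem on integer points close to a curve.**
Let `M ≥ 12` be a positive integer and `I = [A, A + M]` a closed interval with integer
endpoints. Let `f` be twice continuously differentiable on `I` with
`144/M^2 ≤ Δ/C ≤ |f''(x)| ≤ C*Δ ≤ 1` on `I`, where `C ≥ 1` and `Δ ≤ 1`. Let
`max (3√(C^3*Δ)) (6*C^2*√(2/M)) ≤ ε ≤ 1/4`. Then there are `R` distinct integers
`m_1, ..., m_R` in `I` with `‖f(m_r)‖ ≤ ε` (distance to the nearest integer) and
`R ≥ min (ε^4*M/(2^4*3^4*C^7*Δ)) (ε*M/(2^7*3^2*C^4))`. -/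
theorem huxley_integer_points_near_curve
    (M : ℕ) (hM : 12 ≤ M) (A : ℤ) (f : ℝ → ℝ) (C Δ ε : ℝ)
    (hC : 1 ≤ C) (hΔ : Δ ≤ 1)
    (hf : ContDiffOn ℝ 2 f (Set.Icc (A : ℝ) ((A : ℝ) + M)))
    (h144 : 144 / (M : ℝ) ^ 2 ≤ Δ / C)
    (hlow : ∀ x ∈ Set.Icc (A : ℝ) ((A : ℝ) + M),
      Δ / C ≤ |iteratedDerivWithin 2 f (Set.Icc (A : ℝ) ((A : ℝ) + M)) x|)
    (hhigh : ∀ x ∈ Set.Icc (A : ℝ) ((A : ℝ) + M),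
      |iteratedDerivWithin 2 f (Set.Icc (A : ℝ) ((A : ℝ) + M)) x| ≤ C * Δ)
    (hCΔ : C * Δ ≤ 1)
    (hε1 : max (3 * Real.sqrt (C ^ 3 * Δ)) (6 * C ^ 2 * Real.sqrt (2 / M)) ≤ ε)
    (hε2 : ε ≤ 1 / 4) :
    ∃ (R : ℕ) (m : Fin R → ℤ), Function.Injective m ∧
      (∀ r, (m r : ℝ) ∈ Set.Icc (A : ℝ) ((A : ℝ) + M)) ∧
      (∀ r, |f (m r) - round (f (m r))| ≤ ε) ∧
      min (ε ^ 4 * M / (2 ^ 4 * 3 ^ 4 * C ^ 7 * Δ)) (ε * M / (2 ^ 7 * 3 ^ 2 * C ^ 4))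
        ≤ (R : ℝ) := by
  have hC0 : 0 < C := by linarith
  have hM0 : (0 : ℝ) < M := by
    have : (12 : ℝ) ≤ M := by exact_mod_cast hM
    linarith
  have hμ : 0 < Δ / C := lt_of_lt_of_le (by positivity) h144
  have hΔ0 : 0 < Δ := by
    have := mul_pos hμ hC0
    rwa [div_mul_cancel₀ _ hC0.ne'] at this
  have hεa : 3 * Real.sqrt (C ^ 3 * Δ) ≤ ε := (le_max_left _ _).trans hε1
  have hεb : 6 * C ^ 2 * Real.sqrt (2 / M) ≤ ε := (le_max_right _ _).trans hε1
  have hε : 0 < ε := lt_of_lt_of_le (by positivity) hεa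
  have h9 : 9 * C ^ 3 * Δ ≤ ε ^ 2 := by
    have h1 := pow_le_pow_left₀ (by positivity) hεa 2
    rw [mul_pow, Real.sq_sqrt (by positivity)] at h1
    linarith
  have h72 : 72 * C ^ 4 ≤ ε ^ 2 * M := by
    have h1 := pow_le_pow_left₀ (by positivity) hεb 2
    rw [mul_pow, Real.sq_sqrt (by positivity)] at h1
    have h2 := mul_le_mul_of_nonneg_right h1 hM0.le
    refine le_trans (le_of_eq ?_) h2
    field_simp; norm_num
  have h144' : 144 * C ≤ Δ * (M : ℝ) ^ 2 := by
    rw [div_le_div_iff₀ (by positivity) hC0] at h144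
    exact h144
  set I := Set.Icc (A : ℝ) ((A : ℝ) + M) with hI
  have huniq : UniqueDiffOn ℝ I := uniqueDiffOn_Icc (by linarith)
  set d := derivWithin f I with hd
  set e := iteratedDerivWithin 2 f I with he
  have hf1 : ∀ x ∈ I, HasDerivWithinAt f (d x) I x := fun x hx =>
    ((hf.differentiableOn (by norm_num)) x hx).hasDerivWithinAt
  have hee : ∀ x ∈ I, e x = derivWithin d I x := by
    intro x hx
    rw [he, iteratedDerivWithin_succ]
    apply derivWithin_congr
    · intro y hy
      rw [iteratedDerivWithin_one]
    · rw [iteratedDerivWithin_one]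
  have hdC : ContDiffOn ℝ 1 d I := hf.derivWithin huniq (by norm_num)
  have hf2 : ∀ x ∈ I, HasDerivWithinAt d (e x) I x := fun x hx => by
    rw [hee x hx]
    exact ((hdC.differentiableOn (by norm_num)) x hx).hasDerivWithinAt
  have hec : ContinuousOn e I := hf.continuousOn_iteratedDerivWithin (by norm_num) huniq
  have hsign : (∀ x ∈ I, 0 < e x) ∨ (∀ x ∈ I, e x < 0) := by
    by_contra hcon
    push Not at hcon
    obtain ⟨⟨x, hx, hx0⟩, y, hy, hy0⟩ := hcon
    obtain ⟨z, hz, hz0⟩ := isPreconnected_Icc.intermediate_value hx hy hec ⟨hx0, hy0⟩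
    have := hlow z hz
    rw [hz0, abs_zero] at this
    linarith
  obtain ⟨S, hS1, hS2⟩ : ∃ S : Finset ℤ, (∀ m ∈ S, (m : ℝ) ∈ I ∧ ∃ n : ℤ, |f m - n| ≤ ε) ∧
      min (ε ^ 4 * M / (2 ^ 4 * 3 ^ 4 * C ^ 7 * Δ)) (ε * M / (2 ^ 7 * 3 ^ 2 * C ^ 4))
        ≤ (S.card : ℝ) := by
    rcases hsign with hs | hs
    · obtain ⟨h1, h2, h3⟩ := hux_deriv A M f d e (Δ / C) (C * Δ) hf1 hf2
        (fun x hx => by have := hlow x hx; rwa [abs_of_pos (hs x hx)] at this)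
        (fun x hx => (le_abs_self _).trans (hhigh x hx))
      exact hux_convex A M f d C Δ ε hM0 hC hΔ0 hε hε2 h144' h9 h72 hf.continuousOn
        hdC.continuousOn h1 h2 h3
    · obtain ⟨h1, h2, h3⟩ := hux_deriv A M (fun x => - f x) (fun x => - d x) (fun x => - e x)
        (Δ / C) (C * Δ) (fun x hx => (hf1 x hx).neg) (fun x hx => (hf2 x hx).neg)
        (fun x hx => by have := hlow x hx; rwa [abs_of_neg (hs x hx)] at this)
        (fun x hx => (neg_le_abs _).trans (hhigh x hx))
      obtain ⟨S, hS1, hS2⟩ := hux_convex A M (fun x => - f x) (fun x => - d x) C Δ ε hM0 hC hΔ0 hε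
        hε2 h144' h9 h72 hf.continuousOn.neg hdC.continuousOn.neg h1 h2 h3
      refine ⟨S, fun m hm => ?_, hS2⟩
      obtain ⟨h4, n, hn⟩ := hS1 m hm
      refine ⟨h4, -n, ?_⟩
      rw [← abs_neg]
      refine le_trans (le_of_eq ?_) hn
      congr 1
      push_cast; ring
  refine ⟨S.card, fun i => (S.equivFin.symm i : ℤ), ?_, ?_, ?_, hS2⟩
  · exact Subtype.val_injective.comp S.equivFin.symm.injective
  · intro i
    exact (hS1 _ (S.equivFin.symm i).2).1
  · intro i
    obtain ⟨-, n, hn⟩ := hS1 _ (S.equivFin.symm i).2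
    exact (round_le _ n).trans hn
end
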